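/- Let A be a finitely generated commutative unital ℝ-algebra, let f₁,…,f_k ∈ A, let T be the preordering of A generated by f₁,…,f_k, and let h₁,…,h_m ∈ A be bounded on K(T) (there is a constant C with |χ(h_j)| ≤ C for all χ ∈ K(T) and all j). For λ ∈ ℝ^m let I_λ denote the ideal of A generated by h₁−λ₁·1, …, h_m−λ_m·1. Suppose that for every λ ∈ h(K(T)) there exist a finitely generated commutative unital ℝ-algebra B_λ such that every linear functional on B_λ that is nonnegative on all squares is a moment functional on the character space of B_λ, together with a surjective unital ℝ-algebra homomorphism ρ_λ : B_λ → A/I_λ. Then every T-positive linear functional on A is a moment functional on Â. -/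

import Mathlib

/-- The preordering of a commutative ring generated by a set `S`:
the smallest subset containing all squares and `S`, closed under addition
and multiplication. -/
inductive IsInPreordering {A : Type*} [CommRing A] (S : Set A) : A → Prop
  | sq (a : A) : IsInPreordering S (a ^ 2)
  | gen {a : A} : a ∈ S → IsInPreordering S a
  | add {a b : A} : IsInPreordering S a → IsInPreordering S b → IsInPreordering S (a + b)
  | mul {a b : A} : IsInPreordering S a → IsInPreordering S b → IsInPreordering S (a * b)

/-- The positivity set `K(T)` of the preordering generated by `S`, inside the
character space `A →ₐ[ℝ] ℝ`. -/
def KSet {A : Type*} [CommRing A] [Algebra ℝ A] (S : Set A) : Set (A →ₐ[ℝ] ℝ) :=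
  {χ | ∀ a : A, IsInPreordering S a → 0 ≤ χ a}

/-- The character space carries the topology of pointwise convergence. -/
noncomputable instance charTop (A : Type*) [CommRing A] [Algebra ℝ A] :
    TopologicalSpace (A →ₐ[ℝ] ℝ) :=
  TopologicalSpace.induced (fun χ (a : A) => χ a) Pi.topologicalSpace

/-- The Borel σ-algebra on the character space. -/
noncomputable instance charMeas (A : Type*) [CommRing A] [Algebra ℝ A] :
    MeasurableSpace (A →ₐ[ℝ] ℝ) := borel _

/-- `L` is a moment functional: it is given by integration against a positive
Borel measure on the character space. -/
def IsMomentFunctional {A : Type*} [CommRing A] [Algebra ℝ A] (L : A →ₗ[ℝ] ℝ) : Prop :=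
  ∃ μ : MeasureTheory.Measure (A →ₐ[ℝ] ℝ),
    ∀ a : A, MeasureTheory.Integrable (fun χ : A →ₐ[ℝ] ℝ => χ a) μ ∧ L a = ∫ χ : A →ₐ[ℝ] ℝ, χ a ∂μ

/-- A finitely generated commutative real unital algebra on which every linear
functional that is nonnegative on all squares is a moment functional. -/
structure MPAlgebra where
  carrier : Type
  [isRing : CommRing carrier]
  [isAlgebra : Algebra ℝ carrier]
  fg : Algebra.FiniteType ℝ carrier
  mp : ∀ L : carrier →ₗ[ℝ] ℝ, (∀ b : carrier, 0 ≤ L (b ^ 2)) → IsMomentFunctional L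

attribute [instance] MPAlgebra.isRing MPAlgebra.isAlgebra

/-!
By Haviland's theorem (Riesz extension and Riesz–Markov–Kakutani on the character space, with
`∑ gᵢ²` over generators as a proper function) it is enough that `L p ≥ 0` whenever `p` is
nonnegative at every character. The cone of `T`-positive functionals is a union of compact caps, so
by Krein–Milman one may assume that `L` spans an extreme ray.

If `|h| < C` on `K(T)`, the Positivstellensatz certificate `C² t = 1 + s + t h²` and Cauchy–Schwarz
give `L (a h²) ≤ C² L a` on `T`. Hence both summands of
`L = L ((C + h) ·) / (2 C) + L ((C - h) ·) / (2 C)` are `T`-positive, and extremality turns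
multiplication by each `hⱼ` into a scalar `λⱼ`: the functional lives on a single fibre `A / I_λ`.
Pulled back to `B_λ` it is a moment functional, whose measure is concentrated on the characters
killing the finitely generated kernel of `B_λ → A / I_λ`, and these factor through `A`.

For the Positivstellensatz, a preordering not containing `-1` extends to an ordering of a residue
field, and a maximal ordered subfield of the algebraic closure has the intermediate value property
for polynomials. A finitely generated real subalgebra of such a field has a real point: adjoining
elements one at a time and tracking sign changes maps it to an ultrapower of `ℝ`, preserving the
positivity of any given finitely many elements, and a homomorphism to an ultrapower specializes to
`ℝ` at almost every index.
-/

open Polynomial Filter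

universe u

section Orderings

variable {A : Type*} [CommRing A] {P : RingPreordering A}

theorem exists_neg_one_eq_add_mul_of_isMax (hP : IsMax P) {a : A} (ha : a ∉ P) :
    ∃ x ∈ P, ∃ y ∈ P, -1 = x + y * a := by
  by_contra hproper
  let Q : RingPreordering A := .mk' {z | ∃ x ∈ P, ∃ y ∈ P, z = x + y * a}
    (by
      rintro _ _ ⟨x, hx, y, hy, rfl⟩ ⟨x', hx', y', hy', rfl⟩
      exact ⟨x + x', add_mem hx hx', y + y', add_mem hy hy', by ring⟩)
    (by
      rintro _ _ ⟨x, hx, y, hy, rfl⟩ ⟨x', hx', y', hy', rfl⟩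
      exact ⟨x * x' + y * y' * (a * a),
        add_mem (mul_mem hx hx') (mul_mem (mul_mem hy hy') (P.mul_self_mem a)),
        x * y' + x' * y, add_mem (mul_mem hx hy') (mul_mem hx' hy), by ring⟩)
    (fun b => ⟨b * b, P.mul_self_mem b, 0, zero_mem P, by ring⟩)
    hproper
  have hPQ : P ≤ Q := fun x hx => ⟨x, hx, 0, zero_mem P, by ring⟩
  exact ha (hP hPQ ⟨0, zero_mem P, 1, one_mem P, by ring⟩)

theorem isOrdering_of_isMax (hP : IsMax P) : P.IsOrdering := by
  refine RingPreordering.isOrdering_iff.2 fun a b hab => ?_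
  by_contra! hnot
  obtain ⟨x, hx, y, hy, hxy⟩ := exists_neg_one_eq_add_mul_of_isMax hP hnot.1
  obtain ⟨z, hz, w, hw, hzw⟩ := exists_neg_one_eq_add_mul_of_isMax hP hnot.2
  have hneg : (-1 : A) = x + z + x * z + y * w * -(a * b) := by
    linear_combination (1 + z) * hxy - y * a * hzw
  exact P.neg_one_notMem (hneg ▸ add_mem (add_mem (add_mem hx hz) (mul_mem hx hz))
    (mul_mem (mul_mem hy hw) hab))

theorem exists_isOrdering_ge (P : RingPreordering A) : ∃ Q, P ≤ Q ∧ Q.IsOrdering := by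
  obtain ⟨Q, hPQ, hQ⟩ := zorn_le_nonempty_Ici₀ P (fun c _ hc P₀ hP₀ => by
    have hdir (x y : A) (hx : ∃ Q ∈ c, x ∈ Q) (hy : ∃ Q ∈ c, y ∈ Q) :
        ∃ Q ∈ c, x ∈ Q ∧ y ∈ Q := by
      obtain ⟨⟨Q₁, hQ₁, hx⟩, ⟨Q₂, hQ₂, hy⟩⟩ := hx, hy
      rcases hc.total hQ₁ hQ₂ with h | h
      exacts [⟨Q₂, hQ₂, h hx, hy⟩, ⟨Q₁, hQ₁, hx, h hy⟩]
    let U : RingPreordering A := .mk' {x | ∃ Q ∈ c, x ∈ Q}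
      (fun {x y} hx hy => (hdir x y hx hy).imp fun Q hQ => ⟨hQ.1, add_mem hQ.2.1 hQ.2.2⟩)
      (fun {x y} hx hy => (hdir x y hx hy).imp fun Q hQ => ⟨hQ.1, mul_mem hQ.2.1 hQ.2.2⟩)
      (fun x => ⟨P₀, hP₀, P₀.mul_self_mem x⟩)
      (fun ⟨Q, _, hQ⟩ => Q.neg_one_notMem hQ)
    exact ⟨U, fun Q hQ x hx => ⟨Q, hQ, hx⟩⟩) P le_rfl
  exact ⟨Q, hPQ, isOrdering_of_isMax hQ⟩

end Orderings

section OrderedExtensions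

/-- The intermediate value property for polynomials. Among ordered fields it characterises the
real closed ones. -/
def PolynomialIVP (R : Type*) [Field R] [LinearOrder R] : Prop :=
  ∀ (p : R[X]) (a b : R), a < b → p.eval a * p.eval b < 0 → ∃ c, a < c ∧ c < b ∧ p.eval c = 0

/-- The nonnegative elements of an ordered subfield of `Ω`. The subfield is not recorded: its
elements are those of the cone and their negatives. -/
structure SubfieldCone (Ω : Type*) [Field Ω] extends Subsemiring Ω where
  inv_mem' {x : Ω} (hx : x ∈ carrier) : x⁻¹ ∈ carrier
  sub_mem_or_sub_mem' {x y : Ω} (hx : x ∈ carrier) (hy : y ∈ carrier) :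
    x - y ∈ carrier ∨ y - x ∈ carrier
  neg_one_notMem' : -1 ∉ carrier

namespace SubfieldCone

variable {Ω : Type*} [Field Ω]

instance : SetLike (SubfieldCone Ω) Ω where
  coe Q := Q.carrier
  coe_injective P Q h := by cases P; cases Q; congr; exact SetLike.ext' h

instance : PartialOrder (SubfieldCone Ω) := .ofSetLike (SubfieldCone Ω) Ω

instance : SubsemiringClass (SubfieldCone Ω) Ω where
  zero_mem Q := Q.zero_mem'
  one_mem Q := Q.one_mem'
  add_mem {Q} := Q.add_mem'
  mul_mem {Q} := Q.mul_mem'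

/-- The cone of the image of an ordered field under an embedding. -/
def ofRingHom {F : Type*} [Field F] (φ : F →+* Ω) (P : RingPreordering F) [HasMemOrNegMem P] :
    SubfieldCone Ω where
  toSubsemiring := P.toSubsemiring.map φ
  inv_mem' := by
    rintro _ ⟨x, hx, rfl⟩
    exact ⟨x⁻¹, RingPreordering.inv_mem hx, map_inv₀ φ x⟩
  sub_mem_or_sub_mem' := by
    rintro _ _ ⟨x, _, rfl⟩ ⟨y, _, rfl⟩
    refine (mem_or_neg_mem P (x - y)).imp (fun h => ⟨_, h, map_sub φ x y⟩) fun h => ?_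
    exact ⟨_, neg_sub x y ▸ h, map_sub φ y x⟩
  neg_one_notMem' := by
    rintro ⟨x, hx, hx'⟩
    exact P.neg_one_notMem (φ.injective (hx'.trans (by rw [map_neg, map_one])) ▸ hx)

variable (Q : SubfieldCone Ω)

theorem inv_mem {x : Ω} (hx : x ∈ Q) : x⁻¹ ∈ Q := Q.inv_mem' hx

theorem sub_mem_or_sub_mem {x y : Ω} (hx : x ∈ Q) (hy : y ∈ Q) : x - y ∈ Q ∨ y - x ∈ Q :=
  Q.sub_mem_or_sub_mem' hx hy

theorem neg_one_notMem : -1 ∉ Q := Q.neg_one_notMem'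

theorem eq_zero_of_mem_of_neg_mem {x : Ω} (hx : x ∈ Q) (hx' : -x ∈ Q) : x = 0 := by
  by_contra hx0
  refine Q.neg_one_notMem ?_
  simpa [hx0] using mul_mem hx' (Q.inv_mem hx)

/-- The ordered subfield with nonnegative cone `Q`. -/
def subfield : Subfield Ω where
  carrier := {x | x ∈ Q ∨ -x ∈ Q}
  zero_mem' := .inl (zero_mem Q)
  one_mem' := .inl (one_mem Q)
  add_mem' := by
    rintro x y (hx | hx) (hy | hy)
    · exact .inl (add_mem hx hy)
    · simpa [add_comm, neg_add_eq_sub] using Q.sub_mem_or_sub_mem hx hy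
    · simpa [← sub_eq_add_neg, add_comm x] using (Q.sub_mem_or_sub_mem hy hx)
    · exact .inr (neg_add x y ▸ add_mem hx hy)
  mul_mem' := by
    rintro x y (hx | hx) (hy | hy)
    · exact .inl (mul_mem hx hy)
    · exact .inr (by simpa using mul_mem hx hy)
    · exact .inr (by simpa using mul_mem hx hy)
    · exact .inl (by simpa using mul_mem hx hy)
  neg_mem' {x} hx := hx.symm.imp_right fun h => (neg_neg x).symm ▸ h
  inv_mem' x hx := hx.imp Q.inv_mem fun h => inv_neg (a := x) ▸ Q.inv_mem h

/-- `Q`, as a cone of its own subfield. -/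
def nonneg : RingCone Q.subfield where
  toSubsemiring := Q.toSubsemiring.comap Q.subfield.subtype
  eq_zero_of_mem_of_neg_mem' hx hx' := Subtype.ext (Q.eq_zero_of_mem_of_neg_mem hx hx')

instance : HasMemOrNegMem Q.nonneg := ⟨fun x => x.2⟩

open Classical in
noncomputable instance : LinearOrder Q.subfield := .mkOfAddGroupCone Q.nonneg

theorem nonneg_iff {x : Q.subfield} : 0 ≤ x ↔ (x : Ω) ∈ Q := by
  change ((x - 0 : Q.subfield) : Ω) ∈ Q ↔ _
  rw [sub_zero]

instance : IsStrictOrderedRing Q.subfield :=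
  have : IsOrderedRing Q.subfield := .mkOfCone Q.nonneg
  IsOrderedRing.toIsStrictOrderedRing _

theorem exists_isMax_ge : ∃ Q', Q ≤ Q' ∧ IsMax Q' := by
  refine zorn_le_nonempty_Ici₀ Q (fun c _ hc Q₀ hQ₀ => ?_) Q le_rfl
  have hdir (x y : Ω) (hx : ∃ Q ∈ c, x ∈ Q) (hy : ∃ Q ∈ c, y ∈ Q) : ∃ Q ∈ c, x ∈ Q ∧ y ∈ Q := by
    obtain ⟨⟨Q₁, hQ₁, hx⟩, ⟨Q₂, hQ₂, hy⟩⟩ := hx, hy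
    rcases hc.total hQ₁ hQ₂ with h | h
    exacts [⟨Q₂, hQ₂, h hx, hy⟩, ⟨Q₁, hQ₁, hx, h hy⟩]
  let U : SubfieldCone Ω :=
    { carrier := {x | ∃ Q ∈ c, x ∈ Q}
      zero_mem' := ⟨Q₀, hQ₀, zero_mem Q₀⟩
      one_mem' := ⟨Q₀, hQ₀, one_mem Q₀⟩
      add_mem' := fun hx hy => (hdir _ _ hx hy).imp fun Q hQ => ⟨hQ.1, add_mem hQ.2.1 hQ.2.2⟩
      mul_mem' := fun hx hy => (hdir _ _ hx hy).imp fun Q hQ => ⟨hQ.1, mul_mem hQ.2.1 hQ.2.2⟩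
      inv_mem' := fun ⟨Q, hQ, hx⟩ => ⟨Q, hQ, Q.inv_mem hx⟩
      sub_mem_or_sub_mem' := fun hx hy => by
        obtain ⟨Q, hQ, hx, hy⟩ := hdir _ _ hx hy
        exact (Q.sub_mem_or_sub_mem hx hy).imp (⟨Q, hQ, ·⟩) (⟨Q, hQ, ·⟩)
      neg_one_notMem' := fun ⟨Q, _, h⟩ => Q.neg_one_notMem h }
  exact ⟨U, fun Q hQ x hx => ⟨Q, hQ, hx⟩⟩

end SubfieldCone

section WeightedSquares

variable {K L : Type*} [Field K] [LinearOrder K] [IsStrictOrderedRing K] [CommRing L] [Algebra K L]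

variable (K L) in
/-- The semiring of sums of squares weighted by nonnegative scalars, that is, of sums of elements
`c • y ^ 2` with `0 ≤ c`. -/
def weightedSquares : Subsemiring L :=
  Submonoid.subsemiringClosure
    { carrier := {z | ∃ c : K, 0 ≤ c ∧ ∃ y : L, z = c • y ^ 2}
      one_mem' := ⟨1, zero_le_one, 1, by simp⟩
      mul_mem' := by
        rintro _ _ ⟨c, hc, y, rfl⟩ ⟨d, hd, z, rfl⟩
        exact ⟨c * d, mul_nonneg hc hd, y * z, by rw [mul_pow, smul_mul_smul_comm]⟩ }

theorem mem_weightedSquares_iff {x : L} : x ∈ weightedSquares K L ↔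
    x ∈ AddSubmonoid.closure {z : L | ∃ c : K, 0 ≤ c ∧ ∃ y : L, z = c • y ^ 2} :=
  Submonoid.subsemiringClosure_mem _

theorem smul_sq_mem_weightedSquares {c : K} (hc : 0 ≤ c) (y : L) :
    c • y ^ 2 ∈ weightedSquares K L :=
  mem_weightedSquares_iff.2 (AddSubmonoid.subset_closure ⟨c, hc, y, rfl⟩)

theorem algebraMap_mem_weightedSquares {c : K} (hc : 0 ≤ c) :
    algebraMap K L c ∈ weightedSquares K L := by
  simpa [Algebra.algebraMap_eq_smul_one] using smul_sq_mem_weightedSquares hc (1 : L)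

/-- Reducing each square modulo `p` keeps the degree of the lift below `2 * p.natDegree - 1`. -/
theorem exists_mk_eq_of_mem_weightedSquares {p : K[X]} (hp : 0 < p.natDegree) {x : AdjoinRoot p}
    (hx : x ∈ weightedSquares K (AdjoinRoot p)) :
    ∃ s : K[X], s.natDegree ≤ 2 * (p.natDegree - 1) ∧ (∀ z, 0 ≤ s.eval z) ∧
      AdjoinRoot.mk p s = x := by
  rw [mem_weightedSquares_iff] at hx
  induction hx using AddSubmonoid.closure_induction with
  | zero => exact ⟨0, by simp, by simp, by simp⟩
  | add x y _ _ hx hy =>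
    obtain ⟨s, hsdeg, hs, rfl⟩ := hx
    obtain ⟨t, htdeg, ht, rfl⟩ := hy
    exact ⟨s + t, (natDegree_add_le _ _).trans (max_le hsdeg htdeg),
      fun z => by simpa using add_nonneg (hs z) (ht z), map_add _ _ _⟩
  | mem x hx =>
    obtain ⟨c, hc, y, rfl⟩ := hx
    obtain ⟨f, rfl⟩ := AdjoinRoot.mk_surjective y
    have hmod : AdjoinRoot.mk p (f % p) = AdjoinRoot.mk p f :=
      (AdjoinRoot.mk_eq_mk.2 ⟨f / p, by rw [sub_eq_iff_eq_add, EuclideanDomain.div_add_mod]⟩).symm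
    have hdeg : (f % p).natDegree ≤ p.natDegree - 1 :=
      Nat.le_sub_one_of_lt (natDegree_mod_lt f hp.ne')
    refine ⟨c • (f % p) ^ 2, ?_, fun z => ?_, ?_⟩
    · exact (natDegree_smul_le _ _).trans (natDegree_pow_le_of_le 2 hdeg)
    · simpa using mul_nonneg hc (sq_nonneg _)
    · rw [← AdjoinRoot.smul_mk, map_pow, hmod]

/-- If `1 + s = p * g` with `s` nonnegative everywhere and of degree less than `2 * p.natDegree`,
then `g` has lower degree than `p`, no root, and changes sign wherever `p` does. -/
theorem neg_one_notMem_weightedSquares {p : K[X]} {a b : K} (hsign : p.eval a * p.eval b < 0)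
    (hmin : ∀ g : K[X], g.natDegree < p.natDegree → g.eval a * g.eval b < 0 → ∃ c, g.eval c = 0) :
    -1 ∉ weightedSquares K (AdjoinRoot p) := by
  intro hneg
  have hp : 0 < p.natDegree := by
    by_contra! hp
    rw [eq_C_of_natDegree_le_zero hp, eval_C, eval_C] at hsign
    exact (mul_self_nonneg _).not_gt hsign
  obtain ⟨s, hsdeg, hs, hmk⟩ := exists_mk_eq_of_mem_weightedSquares hp hneg
  obtain ⟨g, hg⟩ : p ∣ 1 + s := by rw [← AdjoinRoot.mk_eq_zero]; simp [hmk]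
  have heval (z : K) : p.eval z * g.eval z = 1 + s.eval z := by simp [← eval_mul, ← hg]
  have hpos (z : K) : 0 < p.eval z * g.eval z := by linarith [heval z, hs z]
  have hg0 : g ≠ 0 := by rintro rfl; simpa using hpos a
  have hdeg : g.natDegree < p.natDegree := by
    have hdeg_mul := natDegree_mul (ne_zero_of_natDegree_gt hp) hg0
    have : (1 + s).natDegree ≤ _ := natDegree_add_le_of_le natDegree_one.le hsdeg
    rw [← hg] at hdeg_mul
    omega
  have hgsign : g.eval a * g.eval b < 0 := by
    refine neg_of_mul_pos_right ?_ hsign.le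
    simpa only [mul_mul_mul_comm] using mul_pos (hpos a) (hpos b)
  obtain ⟨c, hc⟩ := hmin g hdeg hgsign
  simpa [hc] using hpos c

end WeightedSquares

namespace SubfieldCone

variable {Ω : Type*} [Field Ω] [IsAlgClosed Ω] {Q : SubfieldCone Ω}

theorem exists_root_of_isMax (hQ : IsMax Q) {p : Q.subfield[X]} (hp : Irreducible p)
    (hneg : -1 ∉ weightedSquares Q.subfield (AdjoinRoot p)) : ∃ c, p.eval c = 0 := by
  have : Fact (Irreducible p) := ⟨hp⟩
  obtain ⟨P, hP, hord⟩ := exists_isOrdering_ge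
    (⟨weightedSquares Q.subfield (AdjoinRoot p), by
      rintro _ ⟨y, rfl⟩
      simpa [sq] using smul_sq_mem_weightedSquares (zero_le_one' Q.subfield) y, hneg⟩ :
      RingPreordering (AdjoinRoot p))
  obtain ⟨α, hα⟩ := IsAlgClosed.exists_eval₂_eq_zero Q.subfield.subtype p
    (degree_pos_of_irreducible hp).ne'
  let φ : AdjoinRoot p →+* Ω := AdjoinRoot.lift Q.subfield.subtype α hα
  have hQP : Q ≤ ofRingHom φ P := fun x hx => by
    let y : Q.subfield := ⟨x, .inl hx⟩
    have hy : 0 ≤ y := Q.nonneg_iff.2 hx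
    exact ⟨algebraMap _ _ y, hP (algebraMap_mem_weightedSquares hy), AdjoinRoot.lift_of hα⟩
  have hroot : φ (AdjoinRoot.root p) = α := AdjoinRoot.lift_root hα
  have hαQ : α ∈ Q.subfield := by
    refine (mem_or_neg_mem P (AdjoinRoot.root p)).imp (fun h => ?_) fun h => ?_
    · exact hQ hQP ⟨_, h, hroot⟩
    · exact hQ hQP ⟨_, h, by rw [← hroot]; exact map_neg φ _⟩
  exact ⟨⟨α, hαQ⟩, Q.subfield.subtype.injective <| by
    rw [map_zero, ← hα, ← eval₂_at_apply]; rfl⟩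

end SubfieldCone

theorem exists_root_Ioo_of_natDegree_eq_one {K : Type*} [Field K] [LinearOrder K]
    [IsStrictOrderedRing K] {p : K[X]} (hp : p.natDegree = 1) {a b : K} (hab : a < b)
    (hsign : p.eval a * p.eval b < 0) : ∃ c, a < c ∧ c < b ∧ p.eval c = 0 := by
  obtain ⟨u, hu, v, rfl⟩ := natDegree_eq_one.1 hp
  simp only [eval_add, eval_mul, eval_C, eval_X] at hsign ⊢
  obtain ⟨c, rfl⟩ : ∃ c, v = -(u * c) := ⟨-v / u, by field_simp⟩
  have hsign' : (a - c) * (b - c) < 0 := by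
    refine neg_of_mul_neg_right (a := u ^ 2) ?_ (sq_nonneg u)
    convert hsign using 1
    ring
  rcases mul_neg_iff.1 hsign' with h | h
  · linarith
  · exact ⟨c, by linarith, by linarith, by ring⟩

theorem SubfieldCone.polynomialIVP_of_isMax {Ω : Type*} [Field Ω] [IsAlgClosed Ω]
    {Q : SubfieldCone Ω} (hQ : IsMax Q) : PolynomialIVP Q.subfield := by
  intro p a b hab hsign
  induction hn : p.natDegree using Nat.strong_induction_on generalizing p with | _ n ih
  subst hn
  by_cases hirr : Irreducible p
  · obtain ⟨c, hc⟩ := exists_root_of_isMax hQ hirr <| neg_one_notMem_weightedSquares hsign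
      fun g hdeg hg => (ih _ hdeg g hg rfl).imp fun c h => h.2.2
    exact exists_root_Ioo_of_natDegree_eq_one
      (natDegree_eq_of_degree_eq_some (degree_eq_one_of_irreducible_of_root hirr hc)) hab hsign
  · have hp0 : p ≠ 0 := by rintro rfl; simp at hsign
    have hpu : ¬ IsUnit p := fun hu => by
      rw [eq_C_of_natDegree_eq_zero (natDegree_eq_zero_of_isUnit hu), eval_C, eval_C] at hsign
      exact (mul_self_nonneg _).not_gt hsign
    obtain ⟨q, r, hq, hr, rfl⟩ : ∃ q r : Q.subfield[X], ¬ IsUnit q ∧ ¬ IsUnit r ∧ p = q * r := by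
      by_contra! h
      exact hirr ⟨hpu, fun {q r} hqr => or_iff_not_imp_left.2 fun hq =>
        by_contra fun hr => h q r hq hr hqr⟩
    have hq0 : q ≠ 0 := left_ne_zero_of_mul hp0
    have hr0 : r ≠ 0 := right_ne_zero_of_mul hp0
    have hqdeg := natDegree_pos_iff_degree_pos.2 (degree_pos_of_ne_zero_of_nonunit hq0 hq)
    have hrdeg := natDegree_pos_iff_degree_pos.2 (degree_pos_of_ne_zero_of_nonunit hr0 hr)
    have hdeg := natDegree_mul hq0 hr0
    simp only [eval_mul, mul_mul_mul_comm _ (eval a r)] at hsign ⊢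
    rcases mul_neg_iff.1 hsign with ⟨_, h⟩ | ⟨h, _⟩
    · obtain ⟨c, hac, hcb, hc⟩ := ih _ (by omega) r h rfl
      exact ⟨c, hac, hcb, by rw [hc, mul_zero]⟩
    · obtain ⟨c, hac, hcb, hc⟩ := ih _ (by omega) q h rfl
      exact ⟨c, hac, hcb, by rw [hc, zero_mul]⟩

theorem exists_fractionRing_ringPreordering {A : Type*} [CommRing A] (P : RingPreordering A)
    [P.IsOrdering] : ∃ Q : RingPreordering (FractionRing (A ⧸ P.support)),
      ∀ a ∈ P, algebraMap (A ⧸ P.support) _ (Ideal.Quotient.mk P.support a) ∈ Q := by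
  let π : A →+* FractionRing (A ⧸ P.support) :=
    (algebraMap (A ⧸ P.support) _).comp (Ideal.Quotient.mk P.support)
  have hker (a : A) : π a = 0 ↔ a ∈ P.support := by simp [π, Ideal.Quotient.eq_zero_iff_mem]
  refine ⟨.mk' {x | ∃ d, π d ≠ 0 ∧ ∃ a ∈ P, π d ^ 2 * x = π a} ?_ ?_ ?_ ?_, fun a ha => ?_⟩
  · rintro x y ⟨d, hd, a, ha, hx⟩ ⟨e, he, b, hb, hy⟩
    refine ⟨d * e, by simp [hd, he], e ^ 2 * a + d ^ 2 * b,
      add_mem (mul_mem (P.pow_two_mem e) ha) (mul_mem (P.pow_two_mem d) hb), ?_⟩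
    simp only [map_add, map_mul, map_pow, ← hx, ← hy]
    ring
  · rintro x y ⟨d, hd, a, ha, hx⟩ ⟨e, he, b, hb, hy⟩
    refine ⟨d * e, by simp [hd, he], a * b, mul_mem ha hb, ?_⟩
    simp only [map_mul, ← hx, ← hy]
    ring
  · intro x
    obtain ⟨u, v, hv, rfl⟩ := IsFractionRing.div_surjective (A := A ⧸ P.support) x
    obtain ⟨u, rfl⟩ := Ideal.Quotient.mk_surjective u
    obtain ⟨d, rfl⟩ := Ideal.Quotient.mk_surjective v
    have hd : π d ≠ 0 := by simpa [π] using nonZeroDivisors.ne_zero hv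
    refine ⟨d, hd, u ^ 2, P.pow_two_mem u, ?_⟩
    change π d ^ 2 * (π u / π d * (π u / π d)) = π (u ^ 2)
    rw [map_pow]
    field_simp
  · rintro ⟨d, hd, a, ha, h⟩
    have hsum : d ^ 2 + a ∈ P.support := by
      rw [← hker, map_add, map_pow, ← h]
      ring
    refine hd ((hker d).2 (Ideal.IsPrime.mem_of_pow_mem inferInstance 2 ⟨P.pow_two_mem d, ?_⟩))
    simpa [add_comm] using add_mem ha hsum.2
  · exact ⟨1, by simp, a, ha, by simp [π]⟩

theorem exists_ringHom_polynomialIVP {A : Type u} [CommRing A]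
    (P : RingPreordering A) :
    ∃ (R : Type u) (_ : Field R) (_ : LinearOrder R) (_ : IsStrictOrderedRing R) (π : A →+* R),
      PolynomialIVP R ∧ ∀ a ∈ P, 0 ≤ π a := by
  obtain ⟨P', hPP', _⟩ := exists_isOrdering_ge P
  obtain ⟨O, hO⟩ := exists_fractionRing_ringPreordering P'
  obtain ⟨O', hOO', _⟩ := exists_isOrdering_ge O
  let F := FractionRing (A ⧸ P'.support)
  let ψ : F →+* AlgebraicClosure F := algebraMap _ _
  let π : A →+* F := (algebraMap (A ⧸ P'.support) F).comp (Ideal.Quotient.mk _)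
  obtain ⟨Q, hQ, hmax⟩ := (SubfieldCone.ofRingHom ψ O').exists_isMax_ge
  have hmem (a : A) (ha : a ∈ P') : ψ (π a) ∈ Q := hQ ⟨_, hOO' (hO a ha), rfl⟩
  refine ⟨Q.subfield, inferInstance, inferInstance, inferInstance,
    (ψ.comp π).codRestrict Q.subfield fun a => ?_, SubfieldCone.polynomialIVP_of_isMax hmax,
    fun a ha => Q.nonneg_iff.2 (hmem a (hPP' ha))⟩
  refine (mem_or_neg_mem P' a).imp (hmem a) fun h => ?_
  simpa using hmem (-a) h

end OrderedExtensions

section IntermediateValue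

theorem exists_eq_X_sub_C_pow_succ_mul {R : Type*} [CommRing R] {p : R[X]} (hp : p ≠ 0)
    {a : R} (ha : p.eval a = 0) :
    ∃ (m : ℕ) (q : R[X]), p = (X - C a) ^ (m + 1) * q ∧ q.eval a ≠ 0 := by
  obtain ⟨q, hq, hqa⟩ := exists_eq_pow_rootMultiplicity_mul_and_not_dvd p hp a
  obtain ⟨m, hm⟩ := Nat.exists_eq_succ_of_ne_zero ((rootMultiplicity_pos hp).2 ha).ne'
  rw [hm] at hq
  exact ⟨m, q, hq, fun h => hqa (dvd_iff_isRoot.2 h)⟩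

theorem derivative_X_sub_C_pow_succ_mul {R : Type*} [CommRing R] (a b : R) (m k : ℕ)
    (w : R[X]) :
    derivative ((X - C a) ^ (m + 1) * ((X - C b) ^ (k + 1) * w)) =
      (X - C a) ^ m * (X - C b) ^ k * (C ((m : R) + 1) * (X - C b) * w +
        C ((k : R) + 1) * (X - C a) * w + (X - C a) * (X - C b) * derivative w) := by
  simp only [derivative_mul, derivative_X_sub_C_pow, map_add, map_one, map_natCast, Nat.cast_add,
    Nat.cast_one, Nat.add_sub_cancel]
  ring

variable {R : Type*} [Field R] [LinearOrder R] [IsStrictOrderedRing R]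

theorem PolynomialIVP.eval_mul_eval_pos (hR : PolynomialIVP R) (p : R[X]) {a b : R} (hab : a ≤ b)
    (hp : ∀ c, a ≤ c → c ≤ b → p.eval c ≠ 0) : 0 < p.eval a * p.eval b := by
  rcases hab.eq_or_lt with rfl | hab'
  · exact mul_self_pos.2 (hp a le_rfl le_rfl)
  by_contra hsign
  have hne : p.eval a * p.eval b ≠ 0 := mul_ne_zero (hp a le_rfl hab) (hp b hab le_rfl)
  obtain ⟨c, hac, hcb, hc⟩ := hR p a b hab' (lt_of_le_of_ne (not_lt.1 hsign) hne)
  exact hp c hac.le hcb.le hc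

theorem PolynomialIVP.eval_pos_of_eval_pos (hR : PolynomialIVP R) (p : R[X]) {a b x y : R}
    (hp : ∀ c, a < c → c < b → p.eval c ≠ 0) (hax : a < x) (hxb : x < b) (hay : a < y) (hyb : y < b)
    (hpx : 0 < p.eval x) : 0 < p.eval y := by
  rcases le_total x y with hxy | hyx
  · exact pos_of_mul_pos_right (hR.eval_mul_eval_pos p hxy fun c hxc hcy =>
      hp c (hax.trans_le hxc) (hcy.trans_lt hyb)) hpx.le
  · exact pos_of_mul_pos_left (hR.eval_mul_eval_pos p hyx fun c hyc hcx =>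
      hp c (hay.trans_le hyc) (hcx.trans_lt hxb)) hpx.le

theorem PolynomialIVP.exists_derivative_eval_eq_zero_of_adjacent (hR : PolynomialIVP R) {p : R[X]}
    (hp : p ≠ 0) {a b : R} (hab : a < b) (ha : p.eval a = 0) (hb : p.eval b = 0)
    (hne : ∀ c, a < c → c < b → p.eval c ≠ 0) :
    ∃ c, a < c ∧ c < b ∧ p.derivative.eval c = 0 := by
  obtain ⟨m, q, rfl, hqa⟩ := exists_eq_X_sub_C_pow_succ_mul hp ha
  have hqb : q.eval b = 0 := by simpa [sub_eq_zero, hab.ne'] using hb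
  obtain ⟨k, w, rfl, hwb⟩ := exists_eq_X_sub_C_pow_succ_mul (right_ne_zero_of_mul hp) hqb
  have hwa : w.eval a ≠ 0 := fun h => hqa (by simp [h])
  have hw : 0 < w.eval a * w.eval b := hR.eval_mul_eval_pos w hab.le fun c hac hcb hc => by
    rcases hac.eq_or_lt with rfl | hac
    · exact hwa hc
    rcases hcb.eq_or_lt with rfl | hcb
    · exact hwb hc
    exact hne c hac hcb (by simp [hc])
  obtain ⟨c, hac, hcb, hc⟩ := hR (C ((m : R) + 1) * (X - C b) * w +
      C ((k : R) + 1) * (X - C a) * w + (X - C a) * (X - C b) * derivative w) a b hab (by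
    have hpos : 0 < ((m : R) + 1) * ((k : R) + 1) * (b - a) ^ 2 * (w.eval a * w.eval b) := by
      have := sub_pos.2 hab
      positivity
    simp only [eval_add, eval_mul, eval_sub, eval_C, eval_X]
    linear_combination hpos)
  exact ⟨c, hac, hcb, by rw [derivative_X_sub_C_pow_succ_mul, eval_mul, hc, mul_zero]⟩

theorem PolynomialIVP.exists_derivative_eval_eq_zero (hR : PolynomialIVP R) {p : R[X]} (hp : p ≠ 0)
    {a b : R} (hab : a < b) (ha : p.eval a = 0) (hb : p.eval b = 0) :
    ∃ c, a < c ∧ c < b ∧ p.derivative.eval c = 0 := by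
  classical
  let Z := p.roots.toFinset.filter (a < ·)
  have mem_Z (z : R) : z ∈ Z ↔ p.eval z = 0 ∧ a < z := by simp [Z, hp]
  obtain ⟨z, hz⟩ := Z.exists_minimal ⟨b, (mem_Z b).2 ⟨hb, hab⟩⟩
  obtain ⟨hpz, haz⟩ := (mem_Z z).1 hz.prop
  obtain ⟨c, hac, hcz, hc⟩ := hR.exists_derivative_eval_eq_zero_of_adjacent hp haz ha hpz
    fun c hac hcz hpc => hz.not_lt ((mem_Z c).2 ⟨hpc, hac⟩) hcz
  exact ⟨c, hac, hcz.trans_le (le_of_not_gt (hz.not_lt ((mem_Z b).2 ⟨hb, hab⟩))), hc⟩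

theorem PolynomialIVP.eval_mul_eval_neg (hR : PolynomialIVP R) {q : R[X]} (hq : q ≠ 0) {a b c : R}
    (hac : a < c) (hcb : c < b) (hc : q.eval c = 0)
    (hder : ∀ z, a < z → z < b → q.derivative.eval z ≠ 0) : q.eval a * q.eval b < 0 := by
  obtain ⟨w, rfl⟩ := dvd_iff_isRoot.2 (show q.IsRoot c from hc)
  have hwc : w.eval c ≠ 0 := fun h => hder c hac hcb (by simp [derivative_mul, h])
  have hw : 0 < w.eval a * w.eval b := by
    refine hR.eval_mul_eval_pos w (hac.trans hcb).le fun z haz hzb hz => ?_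
    have hqz : ((X - C c) * w).eval z = 0 := by simp [hz]
    rcases lt_trichotomy z c with hzc | rfl | hcz
    · obtain ⟨y, hzy, hyc, hy⟩ := hR.exists_derivative_eval_eq_zero hq hzc hqz hc
      exact hder y (haz.trans_lt hzy) (hyc.trans hcb) hy
    · exact hwc hz
    · obtain ⟨y, hcy, hyz, hy⟩ := hR.exists_derivative_eval_eq_zero hq hcz hc hqz
      exact hder y (hac.trans hcy) (hyz.trans_le hzb) hy
  have := mul_pos (mul_pos (sub_pos.2 hac) (sub_pos.2 hcb)) hw
  simp only [eval_mul, eval_sub, eval_X, eval_C]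
  linear_combination this

theorem abs_le_of_eval_eq_zero {q : R[X]} (hq : q ≠ 0) {c : R} (hc : q.eval c = 0) :
    |c| ≤ 1 + (∑ i ∈ Finset.range q.natDegree, |q.coeff i|) / |q.leadingCoeff| := by
  have hlead : 0 < |q.leadingCoeff| := abs_pos.2 (leadingCoeff_ne_zero.2 hq)
  rcases le_total |c| 1 with hc1 | hc1
  · exact hc1.trans (le_add_of_nonneg_right (by positivity))
  refine le_add_of_nonneg_of_le zero_le_one ((le_div_iff₀ hlead).2 ?_)
  obtain ⟨d, hd⟩ : ∃ d, q.natDegree = d + 1 := Nat.exists_eq_succ_of_ne_zero fun h => hq <| by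
    rw [eq_C_of_natDegree_eq_zero h] at hc ⊢
    simpa using hc
  have htop : q.leadingCoeff * c ^ (d + 1) =
      -∑ i ∈ Finset.range q.natDegree, q.coeff i * c ^ i := by
    rw [eval_eq_sum_range, Finset.sum_range_succ, coeff_natDegree] at hc
    rw [← hd]
    linear_combination hc
  refine le_of_mul_le_mul_right ?_ (show 0 < |c| ^ d by positivity)
  calc |c| * |q.leadingCoeff| * |c| ^ d = |q.leadingCoeff * c ^ (d + 1)| := by
        rw [abs_mul, abs_pow]; ring
    _ ≤ ∑ i ∈ Finset.range q.natDegree, |q.coeff i * c ^ i| := by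
        rw [htop, abs_neg]; exact Finset.abs_sum_le_sum_abs _ _
    _ ≤ ∑ i ∈ Finset.range q.natDegree, |q.coeff i| * |c| ^ d := Finset.sum_le_sum fun i hi => by
        rw [abs_mul, abs_pow]
        have : i ≤ d := by have := Finset.mem_range.1 hi; omega
        gcongr
    _ = _ := (Finset.sum_mul ..).symm

end IntermediateValue

section Transfer

variable {K R R' : Type*} [Field K] [LinearOrder K]
  [Field R] [LinearOrder R] [Field R'] [LinearOrder R'] {i : K →+* R} {j : K →+* R'}

/-- Every root in `R` of a nonzero polynomial over `K` of degree less than `n` lies in the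
subfield `i(K)`. -/
def RootsInRange (i : K →+* R) (n : ℕ) : Prop :=
  ∀ q : K[X], q ≠ 0 → q.natDegree < n → ∀ x, (q.map i).eval x = 0 → x ∈ Set.range i

theorem exists_Ioo_forall_eval_ne_zero {c : R} (hc : c ∉ Set.range i) {a b : K}
    (hac : i a < c) (hcb : c < i b) (P : Finset K[X]) (hP : ∀ p ∈ P, p ≠ 0) :
    ∃ u v : K, i u < c ∧ c < i v ∧ ∀ p ∈ P, ∀ z, u < z → z < v → p.eval z ≠ 0 := by
  classical
  let Z : Finset K := {a, b} ∪ P.biUnion fun p => p.roots.toFinset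
  obtain ⟨u, hu⟩ := (Z.filter (i · < c)).exists_maximal ⟨a, by simp [Z, hac]⟩
  obtain ⟨v, hv⟩ := (Z.filter (c < i ·)).exists_minimal ⟨b, by simp [Z, hcb]⟩
  refine ⟨u, v, (Finset.mem_filter.1 hu.prop).2, (Finset.mem_filter.1 hv.prop).2,
    fun p hp z huz hzv hz => ?_⟩
  have hzZ : z ∈ Z := by
    simp only [Z, Finset.mem_union, Finset.mem_biUnion, Multiset.mem_toFinset]
    exact .inr ⟨p, hp, (mem_roots (hP p hp)).2 hz⟩
  rcases lt_trichotomy (i z) c with hzc | hzc | hcz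
  · exact hu.not_gt (Finset.mem_filter.2 ⟨hzZ, hzc⟩) huz
  · exact hc ⟨z, hzc⟩
  · exact hv.not_lt (Finset.mem_filter.2 ⟨hzZ, hcz⟩) hzv

theorem RootsInRange.eval_map_ne_zero {n : ℕ} (H : RootsInRange i n) (hi : StrictMono i) {q : K[X]}
    (hq : q ≠ 0) (hqn : q.natDegree < n) {u v : K} (huv : ∀ z, u < z → z < v → q.eval z ≠ 0)
    {c : R} (huc : i u < c) (hcv : c < i v) : (q.map i).eval c ≠ 0 := by
  intro hc
  obtain ⟨z, rfl⟩ := H q hq hqn c hc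
  rw [eval_map_apply, map_eq_zero] at hc
  exact huv z (hi.lt_iff_lt.1 huc) (hi.lt_iff_lt.1 hcv) hc

theorem PolynomialIVP.exists_eval_map_eq_zero (hR : PolynomialIVP R) (hi : StrictMono i) {q : K[X]}
    {u v : K} (huv : u < v) (hq : q.eval u * q.eval v < 0) :
    ∃ c, i u < c ∧ c < i v ∧ (q.map i).eval c = 0 := by
  refine hR (q.map i) (i u) (i v) (hi huv) ?_
  rw [eval_map_apply, eval_map_apply, ← map_mul, ← map_zero i]
  exact hi hq

theorem PolynomialIVP.eval_mul_eval_neg_of_root [IsStrictOrderedRing R] (hR : PolynomialIVP R)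
    (hi : StrictMono i) {q : K[X]} (hq : q ≠ 0) {n : ℕ} (H : RootsInRange i n)
    (hn : q.derivative.natDegree < n) (hq' : derivative q ≠ 0) {u v : K}
    (hne : ∀ z, u < z → z < v → (derivative q).eval z ≠ 0) {c : R} (huc : i u < c)
    (hcv : c < i v) (hc : (q.map i).eval c = 0) :
    q.eval u * q.eval v < 0 := by
  have := hR.eval_mul_eval_neg ((Polynomial.map_ne_zero_iff i.injective).2 hq) huc hcv hc
    fun z huz hzv => by
      rw [derivative_map]
      exact H.eval_map_ne_zero hi hq' hn hne huz hzv
  rwa [eval_map_apply, eval_map_apply, ← map_mul, ← map_zero i, hi.lt_iff_lt] at this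

theorem exists_map_lt_and_lt_map_of_eval_eq_zero [IsStrictOrderedRing K]
    [IsStrictOrderedRing R] (hi : StrictMono i) {q : K[X]} (hq : q ≠ 0) {c : R}
    (hc : (q.map i).eval c = 0) : ∃ a b : K, i a < c ∧ c < i b := by
  let B : K := 1 + (∑ k ∈ Finset.range q.natDegree, |q.coeff k|) / |q.leadingCoeff|
  have map_abs (x : K) : i |x| = |i x| := map_abs (⟨i, hi.monotone⟩ : K →+*o R) x
  have hB : |c| ≤ i B := by
    have h := abs_le_of_eval_eq_zero ((Polynomial.map_ne_zero_iff i.injective).2 hq) hc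
    rw [natDegree_map_eq_of_injective i.injective,
      leadingCoeff_map_of_injective i.injective] at h
    simpa [B, map_abs] using h
  obtain ⟨hBc, hcB⟩ := abs_le.1 hB
  refine ⟨-B - 1, B + 1, ?_, ?_⟩
  · simp only [map_sub, map_neg, map_one]; linarith
  · simp only [map_add, map_one]; linarith

variable [IsStrictOrderedRing K] [IsStrictOrderedRing R']

theorem RootsInRange.transfer (hi : StrictMono i) (hj : StrictMono j) (hR : PolynomialIVP R)
    (hR' : PolynomialIVP R') {n : ℕ} (H : RootsInRange i n) : RootsInRange j n := by
  classical
  induction n with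
  | zero => exact fun q _ hqn => absurd hqn (Nat.not_lt_zero _)
  | succ n ih =>
  intro q hq hqn c hc
  by_contra hcr
  have hdeg : q.natDegree ≠ 0 := fun hd => hq <| by
    rw [eq_C_of_natDegree_eq_zero hd] at hc ⊢
    simpa using hc
  have hq' : derivative q ≠ 0 := fun h => hdeg (derivative_eq_zero.1 h)
  obtain ⟨a, b, hac, hcb⟩ := exists_map_lt_and_lt_map_of_eval_eq_zero hj hq hc
  obtain ⟨u, v, huc, hcv, huv⟩ := exists_Ioo_forall_eval_ne_zero hcr hac hcb
    {q, derivative q} (by simp [hq, hq'])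
  have hsign : q.eval u * q.eval v < 0 := hR'.eval_mul_eval_neg_of_root hj hq
    (ih fun p hp hpn => H p hp (hpn.trans n.lt_succ_self))
    ((natDegree_derivative_lt hdeg).trans_le (Nat.lt_succ_iff.1 hqn)) hq'
    (huv _ (by simp)) huc hcv hc
  obtain ⟨x, hux, hxv, hx⟩ := hR.exists_eval_map_eq_zero hi (hj.lt_iff_lt.1 (huc.trans hcv)) hsign
  exact H.eval_map_ne_zero hi hq hqn (huv q (by simp)) hux hxv hx

theorem RootsInRange.eval_map_pos_of_eval_map_pos [IsStrictOrderedRing R] (hi : StrictMono i)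
    (hj : StrictMono j) (hR : PolynomialIVP R) (hR' : PolynomialIVP R') {n : ℕ}
    (H : RootsInRange i n) {q : K[X]} (hqn : q.natDegree < n) {u v : K}
    (huv : ∀ z, u < z → z < v → q.eval z ≠ 0) {x : R} {y : R'} (hux : i u < x) (hxv : x < i v)
    (huy : j u < y) (hyv : y < j v) (hx : 0 < (q.map i).eval x) : 0 < (q.map j).eval y := by
  have hq : q ≠ 0 := by rintro rfl; simp at hx
  obtain ⟨w, huw, hwv⟩ := exists_between (hi.lt_iff_lt.1 (hux.trans hxv))
  have hiw : 0 < (q.map i).eval (i w) := hR.eval_pos_of_eval_pos (q.map i)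
    (fun c => H.eval_map_ne_zero hi hq hqn huv) hux hxv (hi huw) (hi hwv) hx
  have hjw : 0 < (q.map j).eval (j w) := by
    rw [eval_map_apply, ← map_zero i, hi.lt_iff_lt] at hiw
    rw [eval_map_apply, ← map_zero j, hj.lt_iff_lt]
    exact hiw
  exact hR'.eval_pos_of_eval_pos (q.map j)
    (fun c => (H.transfer hi hj hR hR').eval_map_ne_zero hj hq hqn huv) (hj huw) (hj hwv)
    huy hyv hjw

end Transfer

section Germs

variable {ι : Type*}

section Algebra

variable {R A : Type*} [CommSemiring R] [Semiring A] [Algebra R A]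

noncomputable instance germAlgebra (l : Filter ι) : Algebra R (l.Germ A) :=
  .ofModule
    (fun r x y => Germ.inductionOn₂ x y fun f g => congrArg Germ.ofFun (smul_mul_assoc r f g))
    (fun r x y => Germ.inductionOn₂ x y fun f g => congrArg Germ.ofFun (mul_smul_comm r f g))

variable (R A) in
/-- The quotient map from functions to germs along a filter, as an algebra homomorphism. -/
def germAlgHom (l : Filter ι) : (ι → A) →ₐ[R] l.Germ A where
  __ := Germ.coeRingHom l
  commutes' r := by
    rw [Algebra.algebraMap_eq_smul_one, Algebra.algebraMap_eq_smul_one]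
    rfl

end Algebra

theorem aeval_coe_germ {σ R A : Type*} [CommSemiring R] [CommSemiring A] [Algebra R A]
    (l : Filter ι) (f : σ → ι → A) (p : MvPolynomial σ R) :
    MvPolynomial.aeval (fun s => (f s : l.Germ A)) p =
      ((fun i => MvPolynomial.aeval (fun s => f s i) p : ι → A) : l.Germ A) := by
  have h : MvPolynomial.aeval f p = fun i => MvPolynomial.aeval (fun s => f s i) p :=
    funext fun i => (MvPolynomial.comp_aeval_apply f (Pi.evalAlgHom R (fun _ : ι => A) i) p)
  rw [← h]
  exact (MvPolynomial.comp_aeval_apply f (germAlgHom R A l) p).symm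

theorem exists_germ_eval {R : Type*} [Semiring R] {l : Filter ι} (p : (l.Germ R)[X]) :
    ∃ P : ι → R[X], ∀ f : ι → R,
      p.eval (f : l.Germ R) = ((fun i => (P i).eval (f i) : ι → R) : l.Germ R) := by
  induction p using Polynomial.induction_on' with
  | add p q hp hq =>
    obtain ⟨P, hP⟩ := hp
    obtain ⟨Q, hQ⟩ := hq
    refine ⟨fun i => P i + Q i, fun f => ?_⟩
    rw [eval_add, hP, hQ, ← Germ.coe_add]
    exact congrArg Germ.ofFun (funext fun i => (eval_add ..).symm)
  | monomial n a =>
    induction a using Germ.inductionOn with | h a =>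
    refine ⟨fun i => monomial n (a i), fun f => ?_⟩
    rw [eval_monomial, ← Germ.coe_pow, ← Germ.coe_mul]
    exact congrArg Germ.ofFun (funext fun i => (eval_monomial ..).symm)

theorem PolynomialIVP.germ {R : Type*} [Field R] [LinearOrder R] [IsStrictOrderedRing R]
    (hR : PolynomialIVP R) (U : Ultrafilter ι) : PolynomialIVP (Germ (U : Filter ι) R) := by
  intro p a b hab hsign
  obtain ⟨P, hP⟩ := exists_germ_eval p
  induction a using Germ.inductionOn with | h a =>
  induction b using Germ.inductionOn with | h b =>
  rw [hP, hP, ← Germ.coe_mul, ← Germ.coe_zero, Germ.coe_lt] at hsign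
  have hroot : ∀ᶠ i in U, ∃ c, a i < c ∧ c < b i ∧ (P i).eval c = 0 := by
    filter_upwards [Germ.coe_lt.1 hab, hsign] with i hi hsi using hR (P i) (a i) (b i) hi hsi
  obtain ⟨c, hc⟩ := hroot.choice
  refine ⟨(c : Germ (U : Filter ι) R), Germ.coe_lt.2 (hc.mono fun i h => h.1),
    Germ.coe_lt.2 (hc.mono fun i h => h.2.1), ?_⟩
  rw [hP]
  exact Germ.coe_eq.2 (hc.mono fun i h => h.2.2)

theorem polynomialIVP_real : PolynomialIVP ℝ := by
  intro p a b hab hsign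
  rcases mul_neg_iff.1 hsign with ⟨ha, hb⟩ | ⟨ha, hb⟩
  · obtain ⟨c, hc, hpc⟩ := intermediate_value_Ioo' hab.le p.continuous.continuousOn ⟨hb, ha⟩
    exact ⟨c, hc.1, hc.2, hpc⟩
  · obtain ⟨c, hc, hpc⟩ := intermediate_value_Ioo hab.le p.continuous.continuousOn ⟨ha, hb⟩
    exact ⟨c, hc.1, hc.2, hpc⟩

theorem exists_algHom_real_of_algHom_germ {A : Type*} [CommRing A] [Algebra ℝ A]
    [Algebra.FiniteType ℝ A] {U : Ultrafilter ι} (φ : A →ₐ[ℝ] Germ (U : Filter ι) ℝ)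
    (s : Finset A) : ∃ χ : A →ₐ[ℝ] ℝ, ∀ a ∈ s, 0 < φ a → 0 < χ a := by
  obtain ⟨n, π, hπ⟩ := Algebra.FiniteType.iff_quotient_mvPolynomial''.1 ‹Algebra.FiniteType ℝ A›
  choose x hx using fun k => Quotient.exists_rep (φ (π (.X k)))
  have hφ (p : MvPolynomial (Fin n) ℝ) : φ (π p) =
      ((fun i => MvPolynomial.aeval (x · i) p : ι → ℝ) : Germ (U : Filter ι) ℝ) := by
    rw [← aeval_coe_germ, ← AlgHom.comp_apply, MvPolynomial.aeval_unique (φ.comp π)]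
    congr 2
    exact funext fun k => (hx k).symm
  obtain ⟨t, ht⟩ := IsNoetherian.noetherian (RingHom.ker π)
  have hker : ∀ᶠ i in (U : Filter ι), ∀ p ∈ t, MvPolynomial.aeval (x · i) p = 0 := by
    refine (Filter.eventually_all_finset t).2 fun p hp => Germ.coe_eq.1 ((hφ p).symm.trans ?_)
    have : π p = 0 := ht.le (Ideal.subset_span hp)
    rw [this, map_zero]
    rfl
  let q := Function.surjInv hπ
  have hq : ∀ a, π (q a) = a := Function.surjInv_eq hπ
  have hpos : ∀ᶠ i in (U : Filter ι), ∀ a ∈ s, 0 < φ a → 0 < MvPolynomial.aeval (x · i) (q a) := by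
    refine (Filter.eventually_all_finset s).2 fun a _ => eventually_imp_distrib_left.2 fun ha => ?_
    rw [← hq a, hφ, ← Germ.coe_zero, Germ.coe_lt] at ha
    exact ha
  obtain ⟨i, hi, his⟩ := (hker.and hpos).exists
  have hle : RingHom.ker π.toRingHom ≤
      RingHom.ker (MvPolynomial.aeval (R := ℝ) (x · i)).toRingHom :=
    ht.symm.le.trans (Ideal.span_le.2 fun p hp => hi p hp)
  refine ⟨AlgHom.liftOfSurjective π hπ (MvPolynomial.aeval (x · i)) hle, fun a ha hφa => ?_⟩
  rw [← hq a, AlgHom.liftOfSurjective_apply]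
  exact his a ha hφa

end Germs

section GermsOfCharacters

theorem exists_algHom_germ_of_eventually_mem {ι k A S : Type*} [CommSemiring k] [Semiring A]
    [Algebra k A] [Semiring S] [Algebra k S] {l : Filter ι} {B : Subalgebra k A}
    {C : ι → Subalgebra k A} (hC : ∀ b ∈ B, ∀ᶠ i in l, b ∈ C i) (χ : ∀ i, C i →ₐ[k] S) :
    ∃ φ : B →ₐ[k] l.Germ S, ∀ b : B, ∃ f : ι → S, φ b = f ∧
      ∀ i (h : (b : A) ∈ C i), f i = χ i ⟨b, h⟩ := by
  classical
  let ψ (b : B) (i : ι) : S := if h : (b : A) ∈ C i then χ i ⟨b, h⟩ else 0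
  have hψ {b : B} {i : ι} (h : (b : A) ∈ C i) : ψ b i = χ i ⟨b, h⟩ := dif_pos h
  let φ : B →ₐ[k] l.Germ S :=
    { toFun b := (ψ b : l.Germ S)
      map_one' := Germ.coe_eq.2 <| .of_forall fun i => (hψ (one_mem _)).trans (map_one _)
      map_zero' := Germ.coe_eq.2 <| .of_forall fun i => (hψ (zero_mem _)).trans (map_zero _)
      map_mul' a b := Germ.coe_eq.2 <| by
        filter_upwards [hC a a.2, hC b b.2] with i ha hb
        exact (hψ (mul_mem ha hb)).trans <|
          (map_mul (χ i) ⟨a, ha⟩ ⟨b, hb⟩).trans (congrArg₂ _ (hψ ha) (hψ hb)).symm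
      map_add' a b := Germ.coe_eq.2 <| by
        filter_upwards [hC a a.2, hC b b.2] with i ha hb
        exact (hψ (add_mem ha hb)).trans <|
          (map_add (χ i) ⟨a, ha⟩ ⟨b, hb⟩).trans (congrArg₂ _ (hψ ha) (hψ hb)).symm
      commutes' r := by
        rw [← (germAlgHom k S l).commutes]
        exact Germ.coe_eq.2 <| .of_forall fun i =>
          (hψ (b := algebraMap k B r) (algebraMap_mem _ r)).trans ((χ i).commutes r) }
  exact ⟨φ, fun b => ⟨ψ b, rfl, fun i h => hψ h⟩⟩

section HasRealPoints

variable {R : Type u} [CommRing R] [PartialOrder R] [Algebra ℝ R]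

/-- A subalgebra `B` of an ordered `ℝ`-algebra has real points if every finitely generated
subalgebra of `B` admits, for any finitely many of its positive elements, a character which is
positive on them. -/
def HasRealPoints (B : Subalgebra ℝ R) : Prop :=
  ∀ C ≤ B, C.FG → ∀ s : Finset C, (∀ a ∈ s, 0 < (a : R)) → ∃ χ : C →ₐ[ℝ] ℝ, ∀ a ∈ s, 0 < χ a

theorem HasRealPoints.of_algHom_germ {B : Subalgebra ℝ R}
    (h : ∀ s : Finset B, (∀ b ∈ s, 0 < (b : R)) → ∃ (ι : Type*) (U : Ultrafilter ι)
      (φ : B →ₐ[ℝ] Germ (U : Filter ι) ℝ), ∀ b ∈ s, 0 < φ b) : HasRealPoints B := by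
  classical
  intro C hCB hC s hs
  obtain ⟨ι, U, φ, hφ⟩ := h (s.image (Subalgebra.inclusion hCB)) (by
    simp only [Finset.forall_mem_image]
    exact hs)
  have : Algebra.FiniteType ℝ C := C.fg_iff_finiteType.1 hC
  obtain ⟨χ, hχ⟩ :=
    exists_algHom_real_of_algHom_germ (φ.comp (Subalgebra.inclusion hCB)) s
  exact ⟨χ, fun a ha => hχ a ha (hφ _ (Finset.mem_image_of_mem _ ha))⟩

theorem HasRealPoints.exists_algHom_germ {B : Subalgebra ℝ R} (hB : HasRealPoints B) :
    ∃ (ι : Type u) (U : Ultrafilter ι) (φ : B →ₐ[ℝ] Germ (U : Filter ι) ℝ),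
      ∀ b : B, 0 < (b : R) → 0 < φ b := by
  classical
  let C (F : Finset B) : Subalgebra ℝ R := Algebra.adjoin ℝ (Subtype.val '' (F : Set B))
  have hχ (F : Finset B) : ∃ χ : C F →ₐ[ℝ] ℝ, ∀ b ∈ F, ∀ h : (b : R) ∈ C F, 0 < (b : R) →
      0 < χ ⟨b, h⟩ := by
    have hCB : C F ≤ B := Algebra.adjoin_le (by rintro _ ⟨b, -, rfl⟩; exact b.2)
    obtain ⟨χ, hχ⟩ := hB (C F) hCB (Subalgebra.fg_def.2 ⟨_, F.finite_toSet.image _, rfl⟩)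
      (((F.finite_toSet.image Subtype.val).preimage
        Subtype.val_injective.injOn).toFinset.filter fun a => 0 < (a : R)) (by simp)
    exact ⟨χ, fun b hb h hpos => hχ _ (by simp [hb, hpos])⟩
  choose χ hχ using hχ
  let U : Ultrafilter (Finset B) := Ultrafilter.of atTop
  have hU (b : B) : ∀ᶠ F in (U : Filter (Finset B)), b ∈ F := by
    filter_upwards [Ultrafilter.of_le atTop (eventually_ge_atTop {b})] with F hF
    exact Finset.singleton_subset_iff.1 hF
  have mem_C {F : Finset B} {b : B} (hb : b ∈ F) : (b : R) ∈ C F :=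
    Algebra.subset_adjoin ⟨b, hb, rfl⟩
  obtain ⟨φ, hφ⟩ := exists_algHom_germ_of_eventually_mem (B := B) (C := C)
    (fun b hb => (hU ⟨b, hb⟩).mono fun F => mem_C) χ
  refine ⟨_, U, φ, fun b hb => ?_⟩
  obtain ⟨f, hf, hfχ⟩ := hφ b
  rw [hf, ← Germ.coe_zero, Germ.coe_lt]
  filter_upwards [hU b] with F hF
  rw [hfχ F (mem_C hF)]
  exact hχ F b hF _ hb

theorem hasRealPoints_sSup {c : Set (Subalgebra ℝ R)} (hc : DirectedOn (· ≤ ·) c)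
    (hne : c.Nonempty) (h : ∀ B ∈ c, HasRealPoints B) : HasRealPoints (sSup c) := by
  rintro _ hle ⟨t, rfl⟩
  have := hne.to_subtype
  have hdir : Directed (· ≤ ·) fun B : c => (B : Subalgebra ℝ R) := directedOn_iff_directed.1 hc
  have ht : (t : Set R) ⊆ ⋃ B : c, ((B : Subalgebra ℝ R) : Set R) := by
    rw [← Subalgebra.coe_iSup_of_directed hdir, ← sSup_eq_iSup']
    exact Algebra.subset_adjoin.trans hle
  obtain ⟨B, hB⟩ := Directed.exists_mem_subset_of_finset_subset_biUnion hdir ht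
  exact h B B.2 _ (Algebra.adjoin_le hB) ⟨t, rfl⟩

end HasRealPoints

section OrderedField

variable {R : Type u} [Field R] [LinearOrder R] [IsStrictOrderedRing R]

theorem strictMono_of_forall_pos {K : Type*} [Ring K] [LinearOrder K] [IsStrictOrderedRing K]
    {f : K →+* R} (hf : ∀ x, 0 < x → 0 < f x) : StrictMono f :=
  fun x y hxy => sub_pos.1 <| by
    rw [← map_sub]
    exact hf _ (sub_pos.2 hxy)

variable [Algebra ℝ R]

theorem strictMono_algebraMap_real : StrictMono (algebraMap ℝ R) := by
  refine strictMono_of_forall_pos fun x hx => ?_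
  rw [← Real.sq_sqrt hx.le, map_pow]
  have : algebraMap ℝ R √x ≠ 0 := by simpa using (Real.sqrt_pos.2 hx).ne'
  positivity

theorem hasRealPoints_bot : HasRealPoints (⊥ : Subalgebra ℝ R) := by
  intro C hC _ s hs
  let χ : C →ₐ[ℝ] ℝ := (Algebra.botEquiv ℝ R).toAlgHom.comp (Subalgebra.inclusion hC)
  have hχ (a : C) : algebraMap ℝ R (χ a) = a := by
    obtain ⟨r, hr⟩ := Algebra.mem_bot.1 (hC a.2)
    have : a = algebraMap ℝ C r := Subtype.ext hr.symm
    rw [this]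
    exact (congrArg _ (χ.commutes r)).trans rfl
  refine ⟨χ, fun a ha => (strictMono_algebraMap_real (R := R)).lt_iff_lt.1 ?_⟩
  rw [map_zero, hχ]
  exact hs a ha

open scoped IntermediateField.algebraAdjoinAdjoin in
theorem HasRealPoints.toSubalgebra_adjoin {s : Set R} (h : HasRealPoints (Algebra.adjoin ℝ s)) :
    HasRealPoints (IntermediateField.adjoin ℝ s).toSubalgebra := by
  obtain ⟨ι, U, φ, hφ⟩ := h.exists_algHom_germ
  have hinj : Function.Injective φ :=
    (strictMono_of_forall_pos (f := φ.toRingHom) hφ).injective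
  let ψ : IntermediateField.adjoin ℝ s →ₐ[ℝ] Germ (U : Filter ι) ℝ :=
    IsFractionRing.liftAlgHom (g := φ) hinj
  have hψ (b : Algebra.adjoin ℝ s) : ψ (algebraMap _ _ b) = φ b :=
    IsFractionRing.lift_algebraMap hinj b
  suffices hpos : ∀ z : IntermediateField.adjoin ℝ s, 0 < (z : R) → 0 < ψ z from
    .of_algHom_germ fun _ hs => ⟨ι, U, ψ, fun z hz => hpos z (hs z hz)⟩
  intro z hz
  obtain ⟨x, hx, y, hy, hxy⟩ := IntermediateField.mem_adjoin_iff_div.1 z.2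
  have hy0 : y ≠ 0 := by
    rintro rfl
    simp [hxy] at hz
  have hzy : z * algebraMap _ _ (⟨y, hy⟩ ^ 2 : Algebra.adjoin ℝ s) =
      algebraMap _ _ (⟨x, hx⟩ * ⟨y, hy⟩ : Algebra.adjoin ℝ s) := by
    refine Subtype.ext ?_
    change (z : R) * y ^ 2 = x * y
    rw [hxy]
    field_simp
  refine pos_of_mul_pos_left (b := φ (⟨y, hy⟩ ^ 2)) ?_ (hφ _ ?_).le
  · rw [← hψ, ← map_mul ψ, hzy, hψ]
    refine hφ _ ?_
    change 0 < x * y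
    rw [← div_mul_cancel₀ x hy0, ← hxy, mul_assoc]
    exact mul_pos hz (mul_self_pos.2 hy0)
  · change 0 < y ^ 2
    positivity

end OrderedField

end GermsOfCharacters

section TransferRoot

variable {K R R' : Type*} [Field K] [LinearOrder K] [IsStrictOrderedRing K]
  [Field R] [LinearOrder R] [IsStrictOrderedRing R]
  [Field R'] [LinearOrder R'] [IsStrictOrderedRing R'] {i : K →+* R} {j : K →+* R'}

theorem RootsInRange.exists_root_forall_eval_map_pos (hi : StrictMono i) (hj : StrictMono j)
    (hR : PolynomialIVP R) (hR' : PolynomialIVP R') {n : ℕ} (H : RootsInRange i n) {t : R}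
    (ht : t ∉ Set.range i) {a b : K} (hat : i a < t) (htb : t < i b) {g : K[X]}
    (hg : (g.map i).eval t = 0) (hgn : g.natDegree ≤ n) {P : Finset K[X]}
    (hPn : ∀ p ∈ P, p.natDegree < n) (hP : ∀ p ∈ P, 0 < (p.map i).eval t) :
    ∃ τ : R', (g.map j).eval τ = 0 ∧ ∀ p ∈ P, 0 < (p.map j).eval τ := by
  classical
  have hP0 : ∀ p ∈ P, p ≠ 0 := by
    rintro p hp rfl
    simpa using hP 0 hp
  rcases eq_or_ne g 0 with rfl | hg0
  · obtain ⟨u, v, hut, htv, huv⟩ := exists_Ioo_forall_eval_ne_zero ht hat htb P hP0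
    obtain ⟨w, huw, hwv⟩ := exists_between (hi.lt_iff_lt.1 (hut.trans htv))
    exact ⟨j w, by simp, fun p hp => H.eval_map_pos_of_eval_map_pos hi hj hR hR' (hPn p hp)
      (huv p hp) hut htv (hj huw) (hj hwv) (hP p hp)⟩
  have hdeg : g.natDegree ≠ 0 := fun hd => hg0 <| by
    rw [eq_C_of_natDegree_eq_zero hd] at hg ⊢
    simpa using hg
  have hg' : derivative g ≠ 0 := fun h => hdeg (derivative_eq_zero.1 h)
  obtain ⟨u, v, hut, htv, huv⟩ := exists_Ioo_forall_eval_ne_zero ht hat htb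
    (insert (derivative g) P) (Finset.forall_mem_insert _ _ _ |>.2 ⟨hg', hP0⟩)
  have hsign : g.eval u * g.eval v < 0 := hR.eval_mul_eval_neg_of_root hi hg0 H
    ((natDegree_derivative_lt hdeg).trans_le hgn) hg' (huv _ (by simp)) hut htv hg
  obtain ⟨τ, huτ, hτv, hτ⟩ := hR'.exists_eval_map_eq_zero hj (hi.lt_iff_lt.1 (hut.trans htv)) hsign
  exact ⟨τ, hτ, fun p hp => H.eval_map_pos_of_eval_map_pos hi hj hR hR' (hPn p hp)
    (huv p (Finset.mem_insert_of_mem hp)) hut htv huτ hτv (hP p hp)⟩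

end TransferRoot

section AdjoinElement

theorem exists_aeval_eq_and_natDegree_lt {F E : Type*} [Field F] [CommRing E] [Nontrivial E]
    [Algebra F E] {x y : E} (hy : y ∈ Algebra.adjoin F {x}) : ∃ p : F[X], aeval x p = y ∧
      (IsIntegral F x → p.natDegree < (minpoly F x).natDegree) := by
  rw [Algebra.adjoin_singleton_eq_range_aeval] at hy
  obtain ⟨p, hp⟩ := hy
  by_cases hx : IsIntegral F x
  · refine ⟨p %ₘ minpoly F x, ?_, fun _ => natDegree_modByMonic_lt _ (minpoly.monic hx)
      (minpoly.ne_one F x)⟩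
    rw [aeval_modByMonic_eq_self_of_root (minpoly.aeval F x)]
    exact hp
  · exact ⟨p, hp, fun h => absurd h hx⟩

theorem exists_algHom_adjoin_singleton {F S T : Type*} [Field F] [CommRing S] [IsDomain S]
    [CommRing T] [Algebra F S] [Algebra F T] {x : S} {y : T} (h : aeval y (minpoly F x) = 0) :
    ∃ φ : Algebra.adjoin F {x} →ₐ[F] T, ∀ (p : F[X]) (z : Algebra.adjoin F {x}),
      aeval x p = z → φ z = aeval y p := by
  refine ⟨Algebra.adjoin.liftSingleton F x y h, fun p z hz => ?_⟩
  have : z = (AlgEquiv.adjoinSingletonEquivAdjoinRootMinpoly F x).symm (AdjoinRoot.mk _ p) := by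
    refine Subtype.ext (hz.symm.trans ?_)
    exact (coe_aeval_mk_apply x (Algebra.self_mem_adjoin_singleton F x)).symm
  rw [this]
  simp only [Algebra.adjoin.liftSingleton, AlgHom.comp_apply]
  exact (congrArg _ (AlgEquiv.apply_symm_apply _ _)).trans rfl

variable {R : Type u} [Field R] [LinearOrder R] [IsStrictOrderedRing R] [Algebra ℝ R]

theorem HasRealPoints.restrictScalars_adjoin_singleton (hR : PolynomialIVP R)
    {K : IntermediateField ℝ R} (hK : HasRealPoints K.toSubalgebra) {t : R} (ht : t ∉ K) {a b : K}
    (hat : a < t) (htb : t < b)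
    (H : ∀ n, (IsIntegral K t → n ≤ (minpoly K t).natDegree) → RootsInRange (algebraMap K R) n) :
    HasRealPoints ((Algebra.adjoin K {t}).restrictScalars ℝ) := by
  classical
  obtain ⟨ι, U, φ, hφ⟩ := hK.exists_algHom_germ
  let j : K →ₐ[ℝ] Germ (U : Filter ι) ℝ := φ
  have hj : StrictMono j.toRingHom := strictMono_of_forall_pos hφ
  let := j.toRingHom.toAlgebra
  have : IsScalarTower ℝ K (Germ (U : Filter ι) ℝ) := .of_algHom j
  have hi : StrictMono (algebraMap K R) := fun _ _ h => h
  have hrange : t ∉ Set.range (algebraMap K R) := fun ⟨x, hx⟩ => ht (hx ▸ x.2)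
  choose p hp hpn using fun x : Algebra.adjoin K {t} => exists_aeval_eq_and_natDegree_lt x.2
  refine .of_algHom_germ fun s hs => ?_
  obtain ⟨n, hn, hgn, hsn⟩ : ∃ n, RootsInRange (algebraMap K R) n ∧ (minpoly K t).natDegree ≤ n ∧
      ∀ x ∈ s, (p x).natDegree < n := by
    by_cases hint : IsIntegral K t
    · exact ⟨_, H _ fun _ => le_rfl, le_rfl, fun x _ => hpn x hint⟩
    · refine ⟨s.sup (fun x => (p x).natDegree) + 1, H _ fun h => absurd h hint, ?_, fun x hx =>
        Nat.lt_succ_of_le (Finset.le_sup (f := fun x => (p x).natDegree) hx)⟩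
      simp [minpoly.eq_zero hint]
  obtain ⟨τ, hτ, hpos⟩ := hn.exists_root_forall_eval_map_pos hi hj hR (polynomialIVP_real.germ U)
    hrange hat htb (g := minpoly K t) (by simp) hgn (P := s.image p) (Finset.forall_mem_image.2 hsn)
    (Finset.forall_mem_image.2 fun x hx => by
      rw [eval_map_algebraMap, hp]
      exact hs x hx)
  obtain ⟨ψ, hψ⟩ := exists_algHom_adjoin_singleton (x := t) (y := τ) ((eval_map _ _).symm.trans hτ)
  refine ⟨ι, U, ψ.restrictScalars ℝ, fun x hx => ?_⟩
  have := hpos _ (Finset.mem_image_of_mem p hx)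
  rw [eval_map] at this
  exact this.trans_eq (hψ _ _ (hp x)).symm

end AdjoinElement

section NextElement

variable {K R : Type*} [Field K] [Field R] [Algebra K R]

theorem natDegree_minpoly_le_of_ne_zero {p : K[X]} (hp : p ≠ 0) {x : R} (hx : aeval x p = 0) :
    (minpoly K x).natDegree ≤ p.natDegree :=
  natDegree_le_natDegree (minpoly.degree_le_of_ne_zero K x hp hx)

variable [LinearOrder R] [IsStrictOrderedRing R]

theorem exists_notMem_range_algebraMap_bounded (h : ¬ Function.Surjective (algebraMap K R)) :
    ∃ t ∉ Set.range (algebraMap K R), ∃ a b, algebraMap K R a < t ∧ t < algebraMap K R b := by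
  obtain ⟨x, hx⟩ := not_forall.1 h
  suffices H : ∃ t ∉ Set.range (algebraMap K R), |t| ≤ 1 by
    obtain ⟨t, ht, htb⟩ := H
    refine ⟨t, ht, -2, 2, ?_, ?_⟩ <;> simp only [map_neg, map_ofNat] <;> linarith [abs_le.1 htb]
  rcases le_total |x| 1 with hx1 | hx1
  · exact ⟨x, hx, hx1⟩
  · refine ⟨x⁻¹, fun ⟨y, hy⟩ => hx ⟨y⁻¹, by rw [map_inv₀, hy, inv_inv]⟩, ?_⟩
    rw [abs_inv]
    exact inv_le_one_of_one_le₀ hx1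

variable [LinearOrder K] [IsStrictOrderedRing K]

theorem exists_notMem_range_forall_rootsInRange (hi : StrictMono (algebraMap K R))
    (h : ¬ Function.Surjective (algebraMap K R)) :
    ∃ t ∉ Set.range (algebraMap K R), (∃ a b, algebraMap K R a < t ∧ t < algebraMap K R b) ∧
      ∀ n, (IsIntegral K t → n ≤ (minpoly K t).natDegree) → RootsInRange (algebraMap K R) n := by
  let S : Set R := {x | IsIntegral K x ∧ x ∉ Set.range (algebraMap K R)}
  have mem_S {q : K[X]} (hq : q ≠ 0) {x : R} (hx : (q.map (algebraMap K R)).eval x = 0)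
      (hxK : x ∉ Set.range (algebraMap K R)) : x ∈ S ∧ (minpoly K x).natDegree ≤ q.natDegree := by
    rw [eval_map_algebraMap] at hx
    exact ⟨⟨IsAlgebraic.isIntegral ⟨q, hq, hx⟩, hxK⟩, natDegree_minpoly_le_of_ne_zero hq hx⟩
  rcases S.eq_empty_or_nonempty with hS | hS
  · obtain ⟨t, ht, htb⟩ := exists_notMem_range_algebraMap_bounded h
    refine ⟨t, ht, htb, fun n _ q hq _ x hx => by_contra fun hxK => ?_⟩
    exact Set.notMem_empty x (hS ▸ (mem_S hq hx hxK).1)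
  · obtain ⟨t, ⟨htint, ht⟩, hmin⟩ :=
      (measure fun x : R => (minpoly K x).natDegree).wf.has_min S hS
    refine ⟨t, ht, exists_map_lt_and_lt_map_of_eval_eq_zero hi (minpoly.ne_zero htint) (by simp),
      fun n hn q hq hqn x hx => by_contra fun hxK => ?_⟩
    obtain ⟨hxS, hxq⟩ := mem_S hq hx hxK
    exact hmin x hxS (hxq.trans_lt (hqn.trans_le (hn htint)))

end NextElement

section ArtinLang

variable {R : Type u} [Field R] [LinearOrder R] [IsStrictOrderedRing R] [Algebra ℝ R]

theorem PolynomialIVP.hasRealPoints_top (hR : PolynomialIVP R) :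
    HasRealPoints (⊤ : Subalgebra ℝ R) := by
  obtain ⟨B, -, hB⟩ := zorn_le_nonempty₀ {B : Subalgebra ℝ R | HasRealPoints B}
    (fun c hc hchain B hB => ⟨sSup c, hasRealPoints_sSup hchain.directedOn ⟨B, hB⟩ hc,
      fun _ => le_sSup⟩) ⊥ hasRealPoints_bot
  let K : IntermediateField ℝ R := IntermediateField.adjoin ℝ B
  have hKB : B = K.toSubalgebra := hB.eq_of_le
    (HasRealPoints.toSubalgebra_adjoin ((Algebra.adjoin_eq B).symm ▸ hB.prop))
    (IntermediateField.subset_adjoin ℝ _)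
  suffices h : Function.Surjective (algebraMap K R) by
    have : B = ⊤ := by
      rw [hKB]
      exact top_unique fun x _ => (h x).elim fun y hy => hy ▸ y.2
    exact this ▸ hB.prop
  by_contra h
  obtain ⟨t, ht, ⟨a, b, hat, htb⟩, H⟩ :=
    exists_notMem_range_forall_rootsInRange (fun _ _ h => h) h
  refine ht ⟨⟨t, ?_⟩, rfl⟩
  have hstep := HasRealPoints.restrictScalars_adjoin_singleton hR (K := K) (hKB ▸ hB.prop)
    (fun h => ht ⟨⟨t, h⟩, rfl⟩) hat htb H
  have hle : B ≤ (Algebra.adjoin K {t}).restrictScalars ℝ :=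
    hKB.le.trans fun x hx => (Algebra.adjoin K {t}).algebraMap_mem ⟨x, hx⟩
  have := hB.eq_of_le hstep hle
  rw [← IntermediateField.mem_toSubalgebra, ← hKB, this]
  exact Algebra.self_mem_adjoin_singleton K t

theorem PolynomialIVP.exists_algHom_real {A : Type*} [CommRing A] [Algebra ℝ A]
    [Algebra.FiniteType ℝ A] (hR : PolynomialIVP R) (φ : A →ₐ[ℝ] R) {s : Set A} (hs : s.Finite)
    (hpos : ∀ a ∈ s, 0 ≤ φ a) : ∃ χ : A →ₐ[ℝ] ℝ, ∀ a ∈ s, 0 ≤ χ a := by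
  classical
  have hfg : φ.range.FG := by
    rw [Subalgebra.fg_iff_finiteType]
    exact .of_surjective φ.rangeRestrict φ.rangeRestrict_surjective
  obtain ⟨χ, hχ⟩ := hR.hasRealPoints_top φ.range le_top hfg
    ((hs.toFinset.image φ.rangeRestrict).filter fun x => 0 < (x : R)) (by simp)
  refine ⟨χ.comp φ.rangeRestrict, fun a ha => ?_⟩
  rcases (hpos a ha).eq_or_lt with h0 | h0
  · have : φ.rangeRestrict a = 0 := Subtype.ext h0.symm
    rw [AlgHom.comp_apply, this, map_zero]
  · refine (hχ _ ?_).le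
    exact Finset.mem_filter.2 ⟨Finset.mem_image_of_mem _ (hs.mem_toFinset.2 ha), h0⟩

end ArtinLang

section Positivstellensatz

section CommRing

variable {A B : Type*} [CommRing A] [CommRing B] {S : Set A}

theorem IsInPreordering.zero (S : Set A) : IsInPreordering S 0 := by
  simpa using IsInPreordering.sq (S := S) 0

theorem IsInPreordering.one (S : Set A) : IsInPreordering S 1 := by
  simpa using IsInPreordering.sq (S := S) 1

theorem IsInPreordering.exists_eq_add_mul {p a : A} (ha : IsInPreordering (insert p S) a) :
    ∃ s t, IsInPreordering S s ∧ IsInPreordering S t ∧ a = s + t * p := by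
  induction ha with
  | sq a => exact ⟨a ^ 2, 0, .sq a, .zero S, by ring⟩
  | gen ha =>
    rcases ha with rfl | ha
    · exact ⟨0, 1, .zero S, .one S, by ring⟩
    · exact ⟨_, 0, .gen ha, .zero S, by ring⟩
  | add _ _ h h' =>
    obtain ⟨s, t, hs, ht, rfl⟩ := h
    obtain ⟨s', t', hs', ht', rfl⟩ := h'
    exact ⟨s + s', t + t', hs.add hs', ht.add ht', by ring⟩
  | mul _ _ h h' =>
    obtain ⟨s, t, hs, ht, rfl⟩ := h
    obtain ⟨s', t', hs', ht', rfl⟩ := h'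
    exact ⟨s * s' + t * t' * p ^ 2, s * t' + s' * t, (hs.mul hs').add ((ht.mul ht').mul (.sq p)),
      (hs.mul ht').add (hs'.mul ht), by ring⟩

theorem IsInPreordering.exists_map_eq {f : A →+* B} (hf : Function.Surjective f) {b : B}
    (hb : IsInPreordering (f '' S) b) : ∃ a, IsInPreordering S a ∧ f a = b := by
  induction hb with
  | sq b =>
    obtain ⟨a, rfl⟩ := hf b
    exact ⟨a ^ 2, .sq a, map_pow f a 2⟩
  | gen hb =>
    obtain ⟨a, ha, rfl⟩ := hb
    exact ⟨a, .gen ha, rfl⟩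
  | add _ _ h h' =>
    obtain ⟨a, ha, rfl⟩ := h
    obtain ⟨a', ha', rfl⟩ := h'
    exact ⟨a + a', ha.add ha', map_add f a a'⟩
  | mul _ _ h h' =>
    obtain ⟨a, ha, rfl⟩ := h
    obtain ⟨a', ha', rfl⟩ := h'
    exact ⟨a * a', ha.mul ha', map_mul f a a'⟩

/-- The preordering generated by `S`, as a `RingPreordering`. -/
def ringPreordering (S : Set A) (hS : ¬ IsInPreordering S (-1)) : RingPreordering A :=
  .mk' {a | IsInPreordering S a} .add .mul (fun a => by simpa [sq] using IsInPreordering.sq a) hS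

end CommRing

variable {A : Type*} [CommRing A] [Algebra ℝ A] {S : Set A}

theorem mem_KSet_iff {χ : A →ₐ[ℝ] ℝ} : χ ∈ KSet S ↔ ∀ a ∈ S, 0 ≤ χ a := by
  refine ⟨fun h a ha => h a (.gen ha), fun h a ha => ?_⟩
  induction ha with
  | sq a => rw [map_pow]; positivity
  | gen ha => exact h _ ha
  | add _ _ h h' => rw [map_add]; exact add_nonneg h h'
  | mul _ _ h h' => rw [map_mul]; exact mul_nonneg h h'

theorem IsInPreordering.smul {a : A} (ha : IsInPreordering S a) {r : ℝ} (hr : 0 ≤ r) :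
    IsInPreordering S (r • a) := by
  have : r • a = algebraMap ℝ A √r ^ 2 * a := by
    rw [← map_pow, Real.sq_sqrt hr, Algebra.smul_def]
  rw [this]
  exact (IsInPreordering.sq _).mul ha

variable [Algebra.FiniteType ℝ A]

theorem KSet_nonempty_of_neg_one_notMem (hS : S.Finite) (h : ¬ IsInPreordering S (-1)) :
    (KSet S).Nonempty := by
  obtain ⟨R, _, _, _, π, hR, hπ⟩ := exists_ringHom_polynomialIVP (ringPreordering S h)
  let := (π.comp (algebraMap ℝ A)).toAlgebra
  obtain ⟨χ, hχ⟩ := hR.exists_algHom_real ({ π with commutes' := fun _ => rfl } : A →ₐ[ℝ] R) hS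
    fun a ha => hπ a (.gen ha)
  exact ⟨χ, mem_KSet_iff.2 hχ⟩

theorem exists_smul_eq_one_add_add_mul_sq (hS : S.Finite) {h : A} {c : ℝ}
    (hc : ∀ χ ∈ KSet S, χ h ^ 2 < c) :
    ∃ s t, IsInPreordering S s ∧ IsInPreordering S t ∧ c • t = 1 + s + t * h ^ 2 := by
  have hneg : IsInPreordering (insert (h ^ 2 - algebraMap ℝ A c) S) (-1) := by
    by_contra hneg
    obtain ⟨χ, hχ⟩ := KSet_nonempty_of_neg_one_notMem (hS.insert _) hneg
    rw [mem_KSet_iff, Set.forall_mem_insert, map_sub, map_pow, AlgHom.commutes] at hχ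
    exact (hc χ (mem_KSet_iff.2 hχ.2)).not_ge (sub_nonneg.1 hχ.1)
  obtain ⟨s, t, hs, ht, hst⟩ := hneg.exists_eq_add_mul
  refine ⟨s, t, hs, ht, ?_⟩
  rw [Algebra.smul_def]
  linear_combination hst

end Positivstellensatz

section CauchySchwarz

variable {A : Type*} [CommRing A] [Algebra ℝ A]

theorem sq_map_mul_le {L : A →ₗ[ℝ] ℝ} (hL : ∀ a, 0 ≤ L (a ^ 2)) (a b : A) :
    L (a * b) ^ 2 ≤ L (a ^ 2) * L (b ^ 2) := by
  have key (r : ℝ) : 0 ≤ L (a ^ 2) * (r * r) + 2 * L (a * b) * r + L (b ^ 2) := by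
    have h : (r • a + b) ^ 2 = (r * r) • a ^ 2 + (2 * r) • (a * b) + b ^ 2 := by
      simp only [Algebra.smul_def, map_mul, map_ofNat]; ring
    have := hL (r • a + b)
    rw [h, map_add, map_add, map_smul, map_smul, smul_eq_mul, smul_eq_mul] at this
    linarith
  have := discrim_le_zero key
  rw [discrim] at this
  linarith

theorem eq_zero_of_map_one_eq_zero {L : A →ₗ[ℝ] ℝ} (hL : ∀ a, 0 ≤ L (a ^ 2)) (h : L 1 = 0) :
    L = 0 := by
  ext a
  have := sq_map_mul_le hL 1 a
  rw [one_mul, one_pow, h, zero_mul] at this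
  exact pow_eq_zero_iff two_ne_zero |>.1 (le_antisymm this (sq_nonneg _))

theorem KSet_nonempty_of_ne_zero [Algebra.FiniteType ℝ A] {S : Set A} (hS : S.Finite)
    {L : A →ₗ[ℝ] ℝ} (hL : ∀ a, IsInPreordering S a → 0 ≤ L a) (h : L ≠ 0) : (KSet S).Nonempty := by
  refine KSet_nonempty_of_neg_one_notMem hS fun hneg => h ?_
  refine eq_zero_of_map_one_eq_zero (fun a => hL _ (.sq a)) (le_antisymm ?_ (hL 1 (.one S)))
  simpa using hL _ hneg

end CauchySchwarz

section BoundedElements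

theorem le_mul_of_sq_le_mul {m : ℕ → ℝ} (h0 : ∀ n, 0 ≤ m n)
    (hm : ∀ n, m (n + 1) ^ 2 ≤ m n * m (n + 2)) {c D : ℝ} (hc : 0 < c)
    (hD : ∀ n, m n ≤ c ^ n * D) : m 1 ≤ c * m 0 := by
  by_contra! hlt
  have hm0 : 0 < m 0 := (h0 0).lt_of_ne fun h => by
    have := hm 0
    rw [← h, zero_mul] at this
    rw [← h, mul_zero] at hlt
    nlinarith
  set q := m 1 / m 0 with hq
  have hcq : c < q := (lt_div_iff₀ hm0).2 hlt
  have hratio (n : ℕ) : 0 < m n ∧ q * m n ≤ m (n + 1) := by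
    induction n with
    | zero => exact ⟨hm0, by rw [hq, div_mul_cancel₀ _ hm0.ne']⟩
    | succ n ih =>
      obtain ⟨hpos, hle⟩ := ih
      have hpos' : 0 < m (n + 1) := (mul_pos (hc.trans hcq) hpos).trans_le hle
      refine ⟨hpos', le_of_mul_le_mul_left ?_ hpos⟩
      calc m n * (q * m (n + 1)) = q * m n * m (n + 1) := by ring
        _ ≤ m (n + 1) * m (n + 1) := by gcongr
        _ ≤ m n * m (n + 2) := by rw [← sq]; exact hm n
  have hgeom (n : ℕ) : q ^ n * m 0 ≤ c ^ n * D := by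
    refine le_trans ?_ (hD n)
    induction n with
    | zero => simp
    | succ n ih => calc
        q ^ (n + 1) * m 0 = q * (q ^ n * m 0) := by ring
        _ ≤ q * m n := by have := hc.trans hcq; gcongr
        _ ≤ m (n + 1) := (hratio n).2
  obtain ⟨n, hn⟩ := pow_unbounded_of_one_lt (D / m 0) ((one_lt_div hc).2 hcq)
  rw [div_pow, div_lt_div_iff₀ hm0 (pow_pos hc n)] at hn
  linarith [hgeom n, mul_comm D (c ^ n)]

variable {A : Type*} [CommRing A] [Algebra ℝ A] {S : Set A}

theorem IsInPreordering.pow_smul_sub_pow {c : ℝ} (hc : 0 ≤ c) {h s t : A}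
    (hs : IsInPreordering S s) (ht : IsInPreordering S t) (hst : c • t = 1 + s + t * h ^ 2)
    (n : ℕ) : IsInPreordering S (c ^ (n + 1) • t - h ^ (2 * n)) := by
  induction n with
  | zero =>
    have : c ^ (0 + 1) • t - h ^ (2 * 0) = s + t * h ^ 2 := by
      rw [zero_add, pow_one, hst]; ring
    rw [this]
    exact hs.add (ht.mul (.sq h))
  | succ n ih =>
    have : c ^ (n + 1 + 1) • t - h ^ (2 * (n + 1)) =
        c ^ (n + 1) • (1 + s) + h ^ 2 * (c ^ (n + 1) • t - h ^ (2 * n)) := by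
      rw [pow_succ c (n + 1), mul_smul, hst]
      simp only [Algebra.smul_def]
      ring
    rw [this]
    exact (((one S).add hs).smul (by positivity)).add ((sq h).mul ih)

variable {L : A →ₗ[ℝ] ℝ} (hL : ∀ a, IsInPreordering S a → 0 ≤ L a)
include hL

theorem map_mul_sq_le_of_smul_eq {c : ℝ} (hc : 0 < c) {h s t : A} (hs : IsInPreordering S s)
    (ht : IsInPreordering S t) (hst : c • t = 1 + s + t * h ^ 2) {a : A}
    (ha : IsInPreordering S a) : L (a * h ^ 2) ≤ c * L a := by
  have h0 (n : ℕ) : 0 ≤ L (a * h ^ (2 * n)) := by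
    rw [mul_comm 2 n, pow_mul]
    exact hL _ (ha.mul (.sq _))
  have hlogconvex (n : ℕ) : L (a * h ^ (2 * (n + 1))) ^ 2 ≤
      L (a * h ^ (2 * n)) * L (a * h ^ (2 * (n + 2))) := by
    have := sq_map_mul_le (L := L ∘ₗ LinearMap.mulLeft ℝ a) (fun x => hL _ (ha.mul (.sq x)))
      (h ^ n) (h ^ (n + 2))
    simp only [LinearMap.comp_apply, LinearMap.mulLeft_apply] at this
    convert this using 3 <;> ring_nf
  have hgrowth (n : ℕ) : L (a * h ^ (2 * n)) ≤ c ^ n * (c * L (t * a)) := by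
    have := hL _ (ha.mul (.pow_smul_sub_pow hc.le hs ht hst n))
    rw [mul_sub, map_sub, mul_smul_comm, map_smul, smul_eq_mul, mul_comm a t] at this
    rw [← mul_assoc, ← pow_succ]
    exact sub_nonneg.1 this
  simpa using le_mul_of_sq_le_mul h0 hlogconvex hc hgrowth

theorem exists_map_mul_sq_le [Algebra.FiniteType ℝ A] (hS : S.Finite) {h : A}
    (hbdd : ∃ C, ∀ χ ∈ KSet S, |χ h| ≤ C) :
    ∃ C : ℝ, 0 < C ∧ ∀ a, IsInPreordering S a → L (a * h ^ 2) ≤ C ^ 2 * L a := by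
  obtain ⟨C, hC⟩ := hbdd
  obtain ⟨s, t, hs, ht, hst⟩ := exists_smul_eq_one_add_add_mul_sq hS (h := h) (c := (|C| + 1) ^ 2)
    fun χ hχ => sq_lt_sq.2 <| by
      rw [abs_of_nonneg (by positivity : 0 ≤ |C| + 1)]
      linarith [hC χ hχ, le_abs_self C]
  exact ⟨|C| + 1, by positivity,
    fun a => map_mul_sq_le_of_smul_eq hL (by positivity) hs ht hst⟩

theorem map_smul_one_add_mul_nonneg {C : ℝ} (hC : 0 < C) {h : A}
    (hh : ∀ a, IsInPreordering S a → L (a * h ^ 2) ≤ C ^ 2 * L a) {a : A}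
    (ha : IsInPreordering S a) : 0 ≤ L ((C • 1 + h) * a) := by
  have key : (C • 1 + h) ^ 2 * a = (2 * C) • ((C • 1 + h) * a) - (C ^ 2 • a - a * h ^ 2) := by
    simp only [Algebra.smul_def, map_mul, map_pow, map_ofNat]; ring
  have := hL _ ((IsInPreordering.sq (C • 1 + h)).mul ha)
  rw [key, map_sub, map_sub, map_smul, map_smul, smul_eq_mul, smul_eq_mul] at this
  exact nonneg_of_mul_nonneg_right (a := 2 * C) (by linarith [hh a ha]) (by positivity)

end BoundedElements

section Quotients

open MeasureTheory

theorem IsMomentFunctional.nonneg {A : Type*} [CommRing A] [Algebra ℝ A] {L : A →ₗ[ℝ] ℝ}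
    (hL : IsMomentFunctional L) {p : A} (hp : ∀ χ : A →ₐ[ℝ] ℝ, 0 ≤ χ p) : 0 ≤ L p := by
  obtain ⟨μ, hμ⟩ := hL
  rw [(hμ p).2]
  exact integral_nonneg hp

variable {B Q : Type*} [CommRing B] [Algebra ℝ B] [CommRing Q] [Algebra ℝ Q]

theorem ae_eq_zero_of_integral_sq_eq_zero {μ : Measure (B →ₐ[ℝ] ℝ)} {b : B}
    (hint : Integrable (fun χ => χ (b ^ 2)) μ) (h : ∫ χ, χ (b ^ 2) ∂μ = 0) :
    ∀ᵐ χ ∂μ, χ b = 0 := by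
  have hnonneg : 0 ≤ fun χ : B →ₐ[ℝ] ℝ => χ (b ^ 2) := fun χ => by
    simpa only [Pi.zero_apply, map_pow] using sq_nonneg (χ b)
  filter_upwards [(integral_eq_zero_iff_of_nonneg hnonneg hint).1 h] with χ hχ
  simpa only [map_pow, Pi.zero_apply, sq_eq_zero_iff] using hχ

theorem nonneg_of_isMomentFunctional_comp {ρ : B →ₐ[ℝ] Q} (hρ : Function.Surjective ρ)
    (hker : (RingHom.ker ρ.toRingHom).FG) {E : Q →ₗ[ℝ] ℝ}
    (hE : IsMomentFunctional (E ∘ₗ ρ.toLinearMap)) {x : Q} (hx : ∀ χ : Q →ₐ[ℝ] ℝ, 0 ≤ χ x) :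
    0 ≤ E x := by
  obtain ⟨μ, hμ⟩ := hE
  obtain ⟨G, hG⟩ := hker
  have hvanish : ∀ᵐ χ ∂μ, ∀ g ∈ G, χ g = 0 := by
    refine (eventually_all_finset G).2 fun g hg => ?_
    have hρg : ρ g = 0 := RingHom.mem_ker.1 (hG ▸ Ideal.subset_span hg)
    refine ae_eq_zero_of_integral_sq_eq_zero (hμ _).1 ((hμ _).2.symm.trans ?_)
    simp [hρg]
  obtain ⟨b, rfl⟩ := hρ x
  suffices 0 ≤ ∫ χ : B →ₐ[ℝ] ℝ, χ b ∂μ from this.trans_eq (hμ b).2.symm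
  refine integral_nonneg_of_ae ?_
  filter_upwards [hvanish] with χ hχ
  have hle : RingHom.ker ρ.toRingHom ≤ RingHom.ker χ.toRingHom := hG ▸ Ideal.span_le.2 hχ
  have := hx (AlgHom.liftOfSurjective ρ hρ χ hle)
  rwa [AlgHom.liftOfSurjective_apply] at this

variable {A : Type*} [CommRing A] [Algebra ℝ A] {I : Ideal A} {E : A →ₗ[ℝ] ℝ}

theorem exists_comp_mk_eq (hE : ∀ a ∈ I, E a = 0) :
    ∃ E' : A ⧸ I →ₗ[ℝ] ℝ, ∀ a, E' (Ideal.Quotient.mk I a) = E a := by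
  have hmem : E ∈ LinearMap.range (Ideal.Quotient.mkₐ ℝ I).toLinearMap.dualMap := by
    rw [LinearMap.range_dualMap_eq_dualAnnihilator_ker, Submodule.mem_dualAnnihilator]
    exact fun a ha => hE a (Ideal.Quotient.eq_zero_iff_mem.1 ha)
  obtain ⟨E', hE'⟩ := hmem
  exact ⟨E', LinearMap.congr_fun hE'⟩

theorem nonneg_of_surjective_quotient [Algebra.FiniteType ℝ B]
    (hB : ∀ L : B →ₗ[ℝ] ℝ, (∀ b, 0 ≤ L (b ^ 2)) → IsMomentFunctional L) {ρ : B →ₐ[ℝ] A ⧸ I}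
    (hρ : Function.Surjective ρ) (hsq : ∀ a, 0 ≤ E (a ^ 2)) (hE : ∀ a ∈ I, E a = 0) {p : A}
    (hp : ∀ χ : A →ₐ[ℝ] ℝ, 0 ≤ χ p) : 0 ≤ E p := by
  obtain ⟨E', hE'⟩ := exists_comp_mk_eq hE
  have : IsNoetherianRing B := Algebra.FiniteType.isNoetherianRing ℝ B
  have hmoment : IsMomentFunctional (E' ∘ₗ ρ.toLinearMap) := hB _ fun b => by
    obtain ⟨a, ha⟩ := Ideal.Quotient.mk_surjective (ρ b)
    simpa only [LinearMap.comp_apply, AlgHom.toLinearMap_apply, map_pow, ← ha, ← hE'] using hsq a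
  rw [← hE']
  exact nonneg_of_isMomentFunctional_comp hρ (IsNoetherian.noetherian _) hmoment
    fun χ => hp (χ.comp (Ideal.Quotient.mkₐ ℝ I))

theorem exists_mem_KSet_forall_mem_eq_zero [Algebra.FiniteType ℝ A] {S : Set A} (hS : S.Finite)
    (hpos : ∀ a, IsInPreordering S a → 0 ≤ E a) (hE : ∀ a ∈ I, E a = 0) (hne : E ≠ 0) :
    ∃ χ ∈ KSet S, ∀ a ∈ I, χ a = 0 := by
  obtain ⟨E', hE'⟩ := exists_comp_mk_eq hE
  have hpos' : ∀ x, IsInPreordering (Ideal.Quotient.mk I '' S) x → 0 ≤ E' x := fun x hx => by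
    obtain ⟨a, ha, rfl⟩ := hx.exists_map_eq Ideal.Quotient.mk_surjective
    exact (hE' a).symm ▸ hpos a ha
  have hne' : E' ≠ 0 := by
    rintro rfl
    exact hne (LinearMap.ext fun a => (hE' a).symm)
  obtain ⟨χ, hχ⟩ := KSet_nonempty_of_ne_zero (hS.image _) hpos' hne'
  refine ⟨χ.comp (Ideal.Quotient.mkₐ ℝ I), mem_KSet_iff.2 fun a ha => ?_, fun a ha => ?_⟩
  · exact mem_KSet_iff.1 hχ _ (Set.mem_image_of_mem _ ha)
  · simp [Ideal.Quotient.eq_zero_iff_mem.2 ha]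

theorem map_eq_zero_of_mem_span {s : Set A} (h : ∀ x ∈ s, ∀ b, E (b * x) = 0) {a : A}
    (ha : a ∈ Ideal.span s) : E a = 0 := by
  suffices Ideal.span s ≤ {
      carrier := {x | ∀ b, E (b * x) = 0}
      add_mem' := fun hx hy b => by rw [mul_add, map_add, hx, hy, add_zero]
      zero_mem' := fun b => by rw [mul_zero, map_zero]
      smul_mem' := fun c x hx b => by rw [smul_eq_mul, ← mul_assoc, hx] } by
    simpa using this ha 1
  exact Ideal.span_le.2 h

end Quotients

section ExtremePoints

open scoped ENNReal

theorem nonneg_of_nonneg_on_extremePoints {V : Type*} [AddCommGroup V] [Module ℝ V]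
    [TopologicalSpace V] [IsTopologicalAddGroup V] [ContinuousSMul ℝ V] [LocallyConvexSpace ℝ V]
    [T2Space V] {s : Set V} (hs : IsCompact s) (hconv : Convex ℝ s) (ℓ : V →L[ℝ] ℝ)
    (hℓ : ∀ x ∈ s.extremePoints ℝ, 0 ≤ ℓ x) {x : V} (hx : x ∈ s) : 0 ≤ ℓ x := by
  have hsub : closure (convexHull ℝ (s.extremePoints ℝ)) ⊆ {x | 0 ≤ ℓ x} :=
    closure_minimal (convexHull_min hℓ (convex_halfSpace_ge ℓ.isLinear 0))
      (isClosed_le continuous_const ℓ.continuous)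
  exact hsub ((closure_convexHull_extremePoints hs hconv).symm ▸ hx)

variable {V : Type*} [AddCommGroup V] [Module ℝ V] {K : ConvexCone ℝ V} {ν : V → ℝ≥0∞}

theorem convex_setOf_le_one (hadd : ∀ x ∈ K, ∀ y ∈ K, ν (x + y) = ν x + ν y)
    (hsmul : ∀ x ∈ K, ∀ r : ℝ, 0 < r → ν (r • x) = ENNReal.ofReal r * ν x) :
    Convex ℝ {x | x ∈ K ∧ ν x ≤ 1} := by
  refine convex_iff_forall_pos.2 fun x hx y hy a b ha hb hab => ?_
  have hax := K.smul_mem ha hx.1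
  have hby := K.smul_mem hb hy.1
  refine ⟨K.add_mem hax hby, ?_⟩
  rw [hadd _ hax _ hby, hsmul x hx.1 a ha, hsmul y hy.1 b hb]
  calc ENNReal.ofReal a * ν x + ENNReal.ofReal b * ν y
      ≤ ENNReal.ofReal a * 1 + ENNReal.ofReal b * 1 := by gcongr; exacts [hx.2, hy.2]
    _ = 1 := by rw [mul_one, mul_one, ← ENNReal.ofReal_add ha.le hb.le, hab, ENNReal.ofReal_one]

theorem inv_smul_mem_setOf_le_one
    (hsmul : ∀ x ∈ K, ∀ r : ℝ, 0 < r → ν (r • x) = ENNReal.ofReal r * ν x) {x : V} (hx : x ∈ K)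
    {r : ℝ} (hr : 0 < r) (hxr : ν x ≤ ENNReal.ofReal r) : r⁻¹ • x ∈ {x | x ∈ K ∧ ν x ≤ 1} := by
  refine ⟨K.smul_mem (inv_pos.2 hr) hx, ?_⟩
  rw [hsmul x hx _ (inv_pos.2 hr), ENNReal.ofReal_inv_of_pos hr]
  exact ENNReal.inv_mul_le_iff (by simpa using hr) ENNReal.ofReal_ne_top |>.2 (by simpa using hxr)

theorem exists_eq_smul_of_add_mem_extremePoints
    (hadd : ∀ x ∈ K, ∀ y ∈ K, ν (x + y) = ν x + ν y)
    (hsmul : ∀ x ∈ K, ∀ r : ℝ, 0 < r → ν (r • x) = ENNReal.ofReal r * ν x)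
    (hzero : ∀ x ∈ K, ν x = 0 → x = 0) {x y : V} (hx : x ∈ K) (hy : y ∈ K)
    (hxy : x + y ∈ {x | x ∈ K ∧ ν x ≤ 1}.extremePoints ℝ) : ∃ s : ℝ, x = s • (x + y) := by
  have hle : ν x + ν y ≤ 1 := hadd x hx y hy ▸ hxy.1.2
  rcases eq_or_ne (ν x) 0 with hx0 | hx0
  · exact ⟨0, by rw [hzero x hx hx0, zero_smul]⟩
  rcases eq_or_ne (ν y) 0 with hy0 | hy0
  · exact ⟨1, by rw [hzero y hy hy0, add_zero, one_smul]⟩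
  have hxtop : ν x ≠ ∞ := ne_top_of_le_ne_top ENNReal.one_ne_top (le_self_add.trans hle)
  have hytop : ν y ≠ ∞ := ne_top_of_le_ne_top ENNReal.one_ne_top (le_add_self.trans hle)
  have hspos : 0 < (ν x).toReal := ENNReal.toReal_pos hx0 hxtop
  have hrpos : 0 < (ν y).toReal := ENNReal.toReal_pos hy0 hytop
  have hsr : (ν x).toReal + (ν y).toReal ≤ 1 := by
    rw [← ENNReal.toReal_add hxtop hytop]
    exact ENNReal.toReal_le_of_le_ofReal zero_le_one (by simpa using hle)
  set t := 1 - (ν y).toReal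
  have htpos : 0 < t := by linarith
  have hxt : t⁻¹ • x ∈ {x | x ∈ K ∧ ν x ≤ 1} := inv_smul_mem_setOf_le_one hsmul hx htpos
    (ENNReal.le_ofReal_iff_toReal_le hxtop htpos.le |>.2 (by linarith))
  have hyt : (ν y).toReal⁻¹ • y ∈ {x | x ∈ K ∧ ν x ≤ 1} :=
    inv_smul_mem_setOf_le_one hsmul hy hrpos (ENNReal.ofReal_toReal hytop).ge
  have hseg : x + y ∈ openSegment ℝ (t⁻¹ • x) ((ν y).toReal⁻¹ • y) :=
    ⟨t, (ν y).toReal, htpos, hrpos, sub_add_cancel 1 _, by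
      rw [smul_inv_smul₀ htpos.ne', smul_inv_smul₀ hrpos.ne']⟩
  exact ⟨t, by rw [← hxy.2 hxt hyt hseg, smul_inv_smul₀ htpos.ne']⟩

end ExtremePoints

section Cap

open scoped ENNReal NNReal

variable {ι A : Type*} [CommRing A] {S : Set A} {e : ι → A} {δ : ι → ℝ≥0}

theorem IsInPreordering.one_add_sq (S : Set A) (a : A) : IsInPreordering S (1 + a ^ 2) :=
  (IsInPreordering.one S).add (.sq a)

/-- An additive and lower semicontinuous weight on the cone of positive functionals, whose unit
sublevel set is a compact cap of the cone if `e` spans `A` and the `δ i` are positive. -/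
noncomputable def weight (e : ι → A) (δ : ι → ℝ≥0) (φ : A → ℝ) : ℝ≥0∞ :=
  ∑' i, ENNReal.ofReal (φ (1 + e i ^ 2)) * δ i

theorem weight_smul {r : ℝ} (hr : 0 ≤ r) (φ : A → ℝ) :
    weight e δ (r • φ) = ENNReal.ofReal r * weight e δ φ := by
  simp only [weight, Pi.smul_apply, smul_eq_mul, ENNReal.ofReal_mul hr, mul_assoc,
    ENNReal.tsum_mul_left]

theorem lowerSemicontinuous_weight : LowerSemicontinuous (weight e δ) :=
  lowerSemicontinuous_tsum fun _ => Continuous.lowerSemicontinuous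
    (ENNReal.continuous_mul_const ENNReal.coe_ne_top |>.comp
      (ENNReal.continuous_ofReal.comp (continuous_apply _)))

variable [Algebra ℝ A]

/-- The cone of linear functionals that are nonnegative on the preordering generated by `S`, inside
the space of all functions `A → ℝ` with the topology of pointwise convergence. -/
def positiveFunctionals (S : Set A) : ConvexCone ℝ (A → ℝ) where
  carrier := {φ | ∃ L : A →ₗ[ℝ] ℝ, (∀ a, IsInPreordering S a → 0 ≤ L a) ∧ ⇑L = φ}
  smul_mem' := by
    rintro r hr _ ⟨L, hL, rfl⟩
    exact ⟨r • L, fun a ha => mul_nonneg hr.le (hL a ha), rfl⟩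
  add_mem' := by
    rintro _ ⟨L, hL, rfl⟩ _ ⟨M, hM, rfl⟩
    exact ⟨L + M, fun a ha => add_nonneg (hL a ha) (hM a ha), rfl⟩

/-- A functional nonnegative on the preordering generated by `S` and proportional to each of its
nonnegative summands, i.e. spanning an extreme ray of the cone of such functionals (or zero). -/
structure IsExtremal (S : Set A) (E : A →ₗ[ℝ] ℝ) : Prop where
  nonneg : ∀ a, IsInPreordering S a → 0 ≤ E a
  exists_eq_smul : ∀ M N : A →ₗ[ℝ] ℝ, (∀ a, IsInPreordering S a → 0 ≤ M a) →
    (∀ a, IsInPreordering S a → 0 ≤ N a) → M + N = E → ∃ s : ℝ, M = s • E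

theorem isClosed_positiveFunctionals (S : Set A) :
    IsClosed (positiveFunctionals S : Set (A → ℝ)) := by
  have : (positiveFunctionals S : Set (A → ℝ)) =
      Set.range ((↑) : (A →ₗ[ℝ] ℝ) → A → ℝ) ∩ ⋂ a, ⋂ _ : IsInPreordering S a, {φ | 0 ≤ φ a} := by
    ext φ
    simp only [Set.mem_inter_iff, Set.mem_iInter, Set.mem_range, SetLike.mem_coe]
    constructor
    · rintro ⟨L, hL, rfl⟩
      exact ⟨⟨L, rfl⟩, hL⟩
    · rintro ⟨⟨L, rfl⟩, hL⟩
      exact ⟨L, hL, rfl⟩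
  rw [this]
  exact (LinearMap.isClosed_range_coe A ℝ (RingHom.id ℝ)).inter (isClosed_iInter fun a =>
    isClosed_iInter fun _ => isClosed_le continuous_const (continuous_apply a))

theorem abs_map_le_map_one_add_sq {L : A →ₗ[ℝ] ℝ} (hL : ∀ a, 0 ≤ L (a ^ 2)) (a : A) :
    |L a| ≤ L (1 + a ^ 2) := by
  have hadd := hL (1 + a)
  have hsub := hL (1 - a)
  rw [show (1 + a) ^ 2 = 1 + a ^ 2 + (2 : ℝ) • a by rw [Algebra.smul_def, map_ofNat]; ring,
    map_add, map_smul, smul_eq_mul] at hadd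
  rw [show (1 - a) ^ 2 = 1 + a ^ 2 - (2 : ℝ) • a by rw [Algebra.smul_def, map_ofNat]; ring,
    map_sub, map_smul, smul_eq_mul] at hsub
  exact abs_le.2 ⟨by linarith, by linarith⟩

theorem exists_countable_span_eq_top (A : Type*) [CommRing A] [Algebra ℝ A]
    [hA : Algebra.FiniteType ℝ A] :
    ∃ (ι : Type) (_ : Countable ι) (e : ι → A), Submodule.span ℝ (Set.range e) = ⊤ := by
  obtain ⟨n, g, hg⟩ := Algebra.FiniteType.iff_quotient_mvPolynomial''.1 hA
  refine ⟨Fin n →₀ ℕ, inferInstance, g ∘ MvPolynomial.basisMonomials (Fin n) ℝ, ?_⟩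
  rw [Set.range_comp]
  exact (Submodule.map_span g.toLinearMap _).symm.trans (by
    rw [Module.Basis.span_eq, Submodule.map_top, LinearMap.range_eq_top.2 hg])

theorem weight_add {φ ψ : A → ℝ} (hφ : φ ∈ positiveFunctionals S)
    (hψ : ψ ∈ positiveFunctionals S) : weight e δ (φ + ψ) = weight e δ φ + weight e δ ψ := by
  obtain ⟨L, hL, rfl⟩ := hφ
  obtain ⟨M, hM, rfl⟩ := hψ
  simp only [weight, Pi.add_apply, ← ENNReal.tsum_add, ← add_mul,
    ENNReal.ofReal_add (hL _ (.one_add_sq S _)) (hM _ (.one_add_sq S _))]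

theorem eq_zero_of_weight_eq_zero (he : Submodule.span ℝ (Set.range e) = ⊤) (hδ : ∀ i, 0 < δ i)
    {φ : A → ℝ} (hφ : φ ∈ positiveFunctionals S) (h : weight e δ φ = 0) : φ = 0 := by
  obtain ⟨L, hL, rfl⟩ := hφ
  suffices L = 0 by rw [this]; rfl
  refine LinearMap.ext_on_range he fun i => ?_
  have hi : L (1 + e i ^ 2) ≤ 0 := by
    simpa [(hδ i).ne'] using ENNReal.tsum_eq_zero.1 h i
  exact abs_nonpos_iff.1 ((abs_map_le_map_one_add_sq (fun a => hL _ (.sq a)) (e i)).trans hi)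

theorem exists_forall_abs_le_of_weight_le_one (he : Submodule.span ℝ (Set.range e) = ⊤)
    (hδ : ∀ i, 0 < δ i) (a : A) :
    ∃ M : ℝ, ∀ φ ∈ positiveFunctionals S, weight e δ φ ≤ 1 → |φ a| ≤ M := by
  have ha : a ∈ Submodule.span ℝ (Set.range e) := he ▸ Submodule.mem_top
  induction ha using Submodule.span_induction with
  | mem x hx =>
    obtain ⟨i, rfl⟩ := hx
    refine ⟨(δ i : ℝ)⁻¹, ?_⟩
    rintro _ ⟨L, hL, rfl⟩ hw
    have hi : ENNReal.ofReal (L (1 + e i ^ 2) * δ i) ≤ 1 := by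
      rw [ENNReal.ofReal_mul (hL _ (.one_add_sq S _)), ENNReal.ofReal_coe_nnreal]
      exact (ENNReal.le_tsum i).trans hw
    refine (abs_map_le_map_one_add_sq (fun a => hL _ (.sq a)) (e i)).trans ?_
    rw [← one_div, le_div_iff₀ (NNReal.coe_pos.2 (hδ i))]
    exact ENNReal.ofReal_le_one.1 hi
  | zero =>
    refine ⟨0, ?_⟩
    rintro _ ⟨L, -, rfl⟩ -
    simp
  | add x y _ _ hx hy =>
    obtain ⟨M, hM⟩ := hx
    obtain ⟨N, hN⟩ := hy
    refine ⟨M + N, ?_⟩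
    rintro _ ⟨L, hL, rfl⟩ hw
    rw [map_add]
    exact (abs_add_le _ _).trans (add_le_add (hM L ⟨L, hL, rfl⟩ hw) (hN L ⟨L, hL, rfl⟩ hw))
  | smul r x _ hx =>
    obtain ⟨M, hM⟩ := hx
    refine ⟨|r| * M, ?_⟩
    rintro _ ⟨L, hL, rfl⟩ hw
    rw [map_smul, smul_eq_mul, abs_mul]
    exact mul_le_mul_of_nonneg_left (hM L ⟨L, hL, rfl⟩ hw) (abs_nonneg r)

theorem isCompact_setOf_weight_le_one (he : Submodule.span ℝ (Set.range e) = ⊤)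
    (hδ : ∀ i, 0 < δ i) : IsCompact {φ | φ ∈ positiveFunctionals S ∧ weight e δ φ ≤ 1} := by
  choose M hM using exists_forall_abs_le_of_weight_le_one (S := S) he hδ
  refine IsCompact.of_isClosed_subset
    (isCompact_univ_pi fun a => isCompact_Icc (a := -M a) (b := M a))
    ((isClosed_positiveFunctionals S).inter (lowerSemicontinuous_weight.isClosed_preimage 1)) ?_
  exact fun φ hφ a _ => abs_le.1 (hM a φ hφ.1 hφ.2)

theorem exists_isExtremal_of_mem_extremePoints (he : Submodule.span ℝ (Set.range e) = ⊤)
    (hδ : ∀ i, 0 < δ i) {φ : A → ℝ}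
    (hφ : φ ∈ {φ | φ ∈ positiveFunctionals S ∧ weight e δ φ ≤ 1}.extremePoints ℝ) :
    ∃ E, IsExtremal S E ∧ ⇑E = φ := by
  obtain ⟨E, hE, rfl⟩ := hφ.1.1
  refine ⟨E, ⟨hE, fun M N hM hN hMN => ?_⟩, rfl⟩
  obtain ⟨s, hs⟩ := exists_eq_smul_of_add_mem_extremePoints (x := ⇑M) (y := ⇑N)
    (fun φ hφ ψ hψ => weight_add hφ hψ) (fun φ _ r hr => weight_smul hr.le φ)
    (fun φ hφ => eq_zero_of_weight_eq_zero he hδ hφ) ⟨M, hM, rfl⟩ ⟨N, hN, rfl⟩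
    (by rwa [← hMN] at hφ)
  exact ⟨s, LinearMap.ext fun a => (congr_fun hs a).trans (by rw [← hMN]; rfl)⟩

theorem nonneg_of_forall_isExtremal [Algebra.FiniteType ℝ A] {p : A}
    (hp : ∀ E : A →ₗ[ℝ] ℝ, IsExtremal S E → 0 ≤ E p) {L : A →ₗ[ℝ] ℝ}
    (hL : ∀ a, IsInPreordering S a → 0 ≤ L a) : 0 ≤ L p := by
  obtain ⟨ι, _, e, he⟩ := exists_countable_span_eq_top A
  obtain ⟨δ, hδ, hlt⟩ := ENNReal.exists_pos_tsum_mul_lt_of_countable one_ne_zero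
    (fun i => ENNReal.ofReal (L (1 + e i ^ 2))) fun _ => ENNReal.ofReal_ne_top
  refine nonneg_of_nonneg_on_extremePoints (isCompact_setOf_weight_le_one he hδ)
    (convex_setOf_le_one (fun φ hφ ψ hψ => weight_add hφ hψ) fun φ _ r hr => weight_smul hr.le φ)
    (ContinuousLinearMap.proj p) (fun φ hφ => ?_) ⟨⟨L, hL, rfl⟩, hlt.le⟩
  obtain ⟨E, hE, rfl⟩ := exists_isExtremal_of_mem_extremePoints he hδ hφ
  exact hp E hE

theorem IsExtremal.exists_map_mul_eq [Algebra.FiniteType ℝ A] {E : A →ₗ[ℝ] ℝ}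
    (hE : IsExtremal S E) (hS : S.Finite) {h : A} (hbdd : ∃ C : ℝ, ∀ χ ∈ KSet S, |χ h| ≤ C) :
    ∃ l : ℝ, ∀ a, E (h * a) = l * E a := by
  obtain ⟨C, hC, hCE⟩ := exists_map_mul_sq_le hE.nonneg hS hbdd
  have hCE' : ∀ a, IsInPreordering S a → E (a * (-h) ^ 2) ≤ C ^ 2 * E a := by simpa using hCE
  have hexpand (x a : A) : E ((C • 1 + x) * a) = C * E a + E (x * a) := by
    rw [add_mul, smul_one_mul, map_add, map_smul, smul_eq_mul]
  obtain ⟨s, hs⟩ := hE.exists_eq_smul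
    ((2 * C)⁻¹ • E ∘ₗ LinearMap.mulLeft ℝ (C • 1 + h))
    ((2 * C)⁻¹ • E ∘ₗ LinearMap.mulLeft ℝ (C • 1 + -h))
    (fun a ha => mul_nonneg (by positivity) (map_smul_one_add_mul_nonneg hE.nonneg hC hCE ha))
    (fun a ha => mul_nonneg (by positivity) (map_smul_one_add_mul_nonneg hE.nonneg hC hCE' ha))
    (LinearMap.ext fun a => by
      change (2 * C)⁻¹ * E ((C • 1 + h) * a) + (2 * C)⁻¹ * E ((C • 1 + -h) * a) = E a
      rw [hexpand, hexpand, neg_mul, map_neg]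
      field_simp
      ring)
  refine ⟨2 * C * s - C, fun a => ?_⟩
  have ha : (2 * C)⁻¹ * E ((C • 1 + h) * a) = s * E a := LinearMap.congr_fun hs a
  rw [hexpand] at ha
  field_simp at ha
  linarith

end Cap

section Haviland

open MeasureTheory Topology
open scoped CompactlySupported

theorem exists_compactlySupported_extension {X A : Type*} [TopologicalSpace X] [CommRing A]
    [Algebra ℝ A] (ev : A →ₐ[ℝ] C(X, ℝ)) {L : A →ₗ[ℝ] ℝ}
    (hL : ∀ a, (∀ x, 0 ≤ ev a x) → 0 ≤ L a) :
    ∃ Λ : C_c(X, ℝ) →ₗ[ℝ] ℝ, ∀ φ a, (∀ x, φ x ≤ ev a x) → Λ φ ≤ L a := by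
  let s : PointedCone ℝ (A × C_c(X, ℝ)) :=
    { carrier := {v | ∀ x, 0 ≤ ev v.1 x + v.2 x}
      add_mem' := fun {v w} hv hw x => by
        have := add_nonneg (hv x) (hw x)
        simpa [add_add_add_comm] using this
      zero_mem' := fun x => by simp
      smul_mem' := fun c v hv x => by
        change 0 ≤ ev ((c : ℝ) • v.1) x + c * v.2 x
        rw [map_smul]
        exact (mul_nonneg c.2 (hv x)).trans_eq (mul_add _ _ _) }
  let f : (A × C_c(X, ℝ)) →ₗ.[ℝ] ℝ :=
    ⟨LinearMap.range (LinearMap.inl ℝ A C_c(X, ℝ)),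
      (L ∘ₗ LinearMap.fst ℝ A C_c(X, ℝ)) ∘ₗ Submodule.subtype _⟩
  have hnonneg : ∀ v : f.domain, (v : A × C_c(X, ℝ)) ∈ s → 0 ≤ f v := by
    rintro ⟨_, a, rfl⟩ ha
    exact hL a fun x => by simpa using ha x
  have hdense : ∀ w, ∃ v : f.domain, (v : A × C_c(X, ℝ)) + w ∈ s := by
    rintro ⟨b, φ⟩
    obtain ⟨C, hC⟩ := φ.hasCompactSupport.exists_bound_of_continuous φ.continuous
    refine ⟨⟨_, algebraMap ℝ A C - b, rfl⟩, fun x => ?_⟩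
    have := neg_le_of_abs_le (hC x)
    simpa [AlgHom.commutes, neg_le_iff_add_nonneg'] using this
  obtain ⟨g, hgf, hgs⟩ := riesz_extension s f hnonneg hdense
  refine ⟨g ∘ₗ LinearMap.inr ℝ A C_c(X, ℝ), fun φ a hφ => ?_⟩
  have hpos : 0 ≤ g (a, -φ) := hgs _ fun x => by simpa using hφ x
  have hga : g (a, 0) = L a := hgf ⟨_, a, rfl⟩
  have hsub : g (a, -φ) = g (a, 0) - g (0, φ) := by simp [← map_sub]
  simpa [hsub, hga] using hpos

theorem exists_measure_forall_integral_le {X A : Type*} [TopologicalSpace X] [T2Space X]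
    [LocallyCompactSpace X] [MeasurableSpace X] [BorelSpace X] [CommRing A]
    [Algebra ℝ A] (ev : A →ₐ[ℝ] C(X, ℝ)) {L : A →ₗ[ℝ] ℝ}
    (hL : ∀ a, (∀ x, 0 ≤ ev a x) → 0 ≤ L a) :
    ∃ μ : Measure X, IsFiniteMeasureOnCompacts μ ∧
      ∀ (φ : C_c(X, ℝ)) (a : A), (∀ x, φ x ≤ ev a x) → ∫ x, φ x ∂μ ≤ L a := by
  obtain ⟨Λ, hΛ⟩ := exists_compactlySupported_extension ev hL
  let Λpos : C_c(X, ℝ) →ₚ[ℝ] ℝ := PositiveLinearMap.mk₀ Λ fun φ hφ => by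
    have := hΛ (-φ) 0 fun x => by simpa using hφ x
    simpa using this
  refine ⟨RealRMK.rieszMeasure Λpos, inferInstance, fun φ a hφ => ?_⟩
  rw [RealRMK.integral_rieszMeasure]
  exact hΛ φ a hφ

theorem integrable_and_eq_integral_of_tendsto {X : Type*} [MeasurableSpace X] {μ : Measure X}
    {f : X → ℝ} {g : ℕ → X → ℝ} {c : ℝ} (hg : ∀ n, Integrable (g n) μ)
    (hnonneg : ∀ n x, 0 ≤ g n x) (hle : ∀ n x, g n x ≤ f x)
    (hlim : ∀ x, Tendsto (fun n => g n x) atTop (𝓝 (f x)))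
    (hint : Tendsto (fun n => ∫ x, g n x ∂μ) atTop (𝓝 c)) :
    Integrable f μ ∧ c = ∫ x, f x ∂μ := by
  have hmeas : AEStronglyMeasurable f μ :=
    aestronglyMeasurable_of_tendsto_ae atTop (fun n => (hg n).aestronglyMeasurable)
      (Eventually.of_forall hlim)
  have hlintegral : ∫⁻ x, ENNReal.ofReal (f x) ∂μ ≤ ENNReal.ofReal c :=
    calc ∫⁻ x, ENNReal.ofReal (f x) ∂μ
        = ∫⁻ x, liminf (fun n => ENNReal.ofReal (g n x)) atTop ∂μ :=
          lintegral_congr fun x => (ENNReal.tendsto_ofReal (hlim x)).liminf_eq.symm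
      _ ≤ liminf (fun n => ∫⁻ x, ENNReal.ofReal (g n x) ∂μ) atTop :=
          lintegral_liminf_le' fun n => (hg n).aemeasurable.ennreal_ofReal
      _ = liminf (fun n => ENNReal.ofReal (∫ x, g n x ∂μ)) atTop := by
          simp only [ofReal_integral_eq_lintegral_ofReal (hg _) (ae_of_all μ (hnonneg _))]
      _ = ENNReal.ofReal c := (ENNReal.tendsto_ofReal hint).liminf_eq
  have hf : Integrable f μ := by
    refine ⟨hmeas, ?_⟩
    rw [hasFiniteIntegral_iff_ofReal (ae_of_all μ fun x => (hnonneg 0 x).trans (hle 0 x))]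
    exact hlintegral.trans_lt ENNReal.ofReal_lt_top
  refine ⟨hf, tendsto_nhds_unique hint <| tendsto_integral_of_dominated_convergence f
    (fun n => (hg n).aestronglyMeasurable) hf (fun n => ae_of_all μ fun x => ?_)
    (ae_of_all μ hlim)⟩
  rw [Real.norm_of_nonneg (hnonneg n x)]
  exact hle n x

section Evaluation

variable {X A : Type*} [TopologicalSpace X] [MeasurableSpace X] [BorelSpace X] [CommRing A]
  [Algebra ℝ A] {ev : A →ₐ[ℝ] C(X, ℝ)} {N : A} {L : A →ₗ[ℝ] ℝ}

theorem integrable_and_eq_integral_of_forall_integral_le [R1Space X] {μ : Measure X}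
    [IsFiniteMeasureOnCompacts μ] (hN : ∀ x, 0 ≤ ev N x)
    (hcompact : ∀ r, IsCompact {x | ev N x ≤ r})
    (hμ : ∀ (φ : C_c(X, ℝ)) (a : A), (∀ x, φ x ≤ ev a x) → ∫ x, φ x ∂μ ≤ L a)
    {a : A} (ha : ∀ x, 0 ≤ ev a x) : Integrable (ev a) μ ∧ L a = ∫ x, ev a x ∂μ := by
  -- The positive part of `a - N a / (n + 1)` vanishes off the compact set `N ≤ n + 1`.
  let b (n : ℕ) : A := a - ((n : ℝ) + 1)⁻¹ • (N * a)
  have hb (n : ℕ) (x : X) : ev (b n) x = (1 - ((n : ℝ) + 1)⁻¹ * ev N x) * ev a x := by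
    simp [b, sub_mul, mul_assoc]
  let φ (n : ℕ) : C_c(X, ℝ) := ⟨⟨fun x => max 0 (ev (b n) x), by fun_prop⟩,
    HasCompactSupport.intro (hcompact (n + 1)) fun x hx => by
      have hx : (n : ℝ) + 1 < ev N x := not_le.1 hx
      refine max_eq_left ((hb n x).trans_le (mul_nonpos_of_nonpos_of_nonneg ?_ (ha x)))
      rw [sub_nonpos, ← div_eq_inv_mul, one_le_div (by positivity)]
      exact hx.le⟩
  have hφ_le (n : ℕ) (x : X) : φ n x ≤ ev a x := by
    refine max_le (ha x) ((hb n x).trans_le (mul_le_of_le_one_left (ha x) ?_))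
    exact sub_le_self 1 (mul_nonneg (by positivity) (hN x))
  have hle_φ (n : ℕ) : L (b n) ≤ ∫ x, φ n x ∂μ := by
    have := hμ (-φ n) (-b n) fun x => by simp [φ]
    simpa [integral_neg] using this
  have hinv : Tendsto (fun n : ℕ => ((n : ℝ) + 1)⁻¹) atTop (𝓝 0) := by
    simpa only [one_div] using tendsto_one_div_add_atTop_nhds_zero_nat (𝕜 := ℝ)
  refine integrable_and_eq_integral_of_tendsto (g := fun n => φ n)
    (fun n => (φ n).continuous.integrable_of_hasCompactSupport (φ n).hasCompactSupport)
    (fun n x => le_max_left _ _) hφ_le (fun x => ?_)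
    (tendsto_of_tendsto_of_tendsto_of_le_of_le ?_ tendsto_const_nhds hle_φ
      fun n => hμ (φ n) a (hφ_le n))
  · have : Tendsto (fun n => ev (b n) x) atTop (𝓝 (ev a x)) := by
      simpa [hb] using ((hinv.mul_const (ev N x)).const_sub 1).mul_const (ev a x)
    rw [← max_eq_right (ha x)]
    exact tendsto_const_nhds.max this
  · simpa [b] using (hinv.mul_const (L (N * a))).const_sub (L a)

theorem exists_measure_forall_integrable_and_eq_integral [T2Space X] [LocallyCompactSpace X]
    (hN : ∀ x, 0 ≤ ev N x) (hcompact : ∀ r, IsCompact {x | ev N x ≤ r})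
    (hL : ∀ a, (∀ x, 0 ≤ ev a x) → 0 ≤ L a) :
    ∃ μ : Measure X, ∀ a, Integrable (ev a) μ ∧ L a = ∫ x, ev a x ∂μ := by
  obtain ⟨μ, hfinite, hμ⟩ := exists_measure_forall_integral_le ev hL
  refine ⟨μ, fun a => ?_⟩
  have hsq (b : A) : Integrable (ev (b ^ 2)) μ ∧ L (b ^ 2) = ∫ x, ev (b ^ 2) x ∂μ :=
    integrable_and_eq_integral_of_forall_integral_le hN hcompact hμ fun x => by
      simpa only [map_pow, ContinuousMap.pow_apply] using sq_nonneg (ev b x)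
  have hpolar : a = (4⁻¹ : ℝ) • ((a + 1) ^ 2 - (a - 1) ^ 2) := by
    rw [eq_inv_smul_iff₀ four_ne_zero, Algebra.smul_def, map_ofNat]
    ring
  obtain ⟨hadd, hLadd⟩ := hsq (a + 1)
  obtain ⟨hsub, hLsub⟩ := hsq (a - 1)
  rw [hpolar]
  simp only [map_smul, map_sub]
  refine ⟨(hadd.sub hsub).smul _, ?_⟩
  simp only [ContinuousMap.smul_apply, ContinuousMap.sub_apply]
  rw [integral_smul, integral_sub hadd hsub, hLadd, hLsub]

end Evaluation

end Haviland

section CharacterSpace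

open MeasureTheory Topology

variable {A : Type*} [CommRing A] [Algebra ℝ A]

instance : BorelSpace (A →ₐ[ℝ] ℝ) := ⟨rfl⟩

theorem isEmbedding_character : IsEmbedding fun (χ : A →ₐ[ℝ] ℝ) (a : A) => χ a :=
  ⟨⟨rfl⟩, DFunLike.coe_injective⟩

theorem isClosedEmbedding_character :
    IsClosedEmbedding fun (χ : A →ₐ[ℝ] ℝ) (a : A) => χ a := by
  refine ⟨isEmbedding_character, ?_⟩
  have hrange : Set.range (fun (χ : A →ₐ[ℝ] ℝ) (a : A) => χ a) =
      Set.range ((⇑) : (A →ₗ[ℝ] ℝ) → A → ℝ) ∩ Set.range ((⇑) : (A →* ℝ) → A → ℝ) := by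
    ext F
    constructor
    · rintro ⟨χ, rfl⟩
      exact ⟨⟨χ.toLinearMap, rfl⟩, ⟨χ, rfl⟩⟩
    · rintro ⟨⟨φ, rfl⟩, ⟨ψ, hψ⟩⟩
      have hone : φ 1 = 1 := (congrFun hψ 1).symm.trans (map_one ψ)
      have hmul (a b : A) : φ (a * b) = φ a * φ b := by
        simp only [← congrFun hψ, map_mul]
      exact ⟨AlgHom.ofLinearMap φ hone hmul, rfl⟩
  rw [hrange]
  exact (LinearMap.isClosed_range_coe A ℝ (RingHom.id ℝ)).inter
    (MonoidHom.isClosed_range_coe A ℝ)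

instance : T2Space (A →ₐ[ℝ] ℝ) := isEmbedding_character.t2Space

theorem continuous_character_apply (a : A) : Continuous fun χ : A →ₐ[ℝ] ℝ => χ a :=
  (continuous_apply a).comp isEmbedding_character.continuous

/-- Elements of `A` as continuous functions on the character space. -/
def evaluationHom (A : Type*) [CommRing A] [Algebra ℝ A] : A →ₐ[ℝ] C(A →ₐ[ℝ] ℝ, ℝ) where
  toFun a := ⟨fun χ => χ a, continuous_character_apply a⟩
  map_one' := ContinuousMap.ext map_one
  map_mul' a b := ContinuousMap.ext fun χ => map_mul χ a b
  map_zero' := ContinuousMap.ext map_zero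
  map_add' a b := ContinuousMap.ext fun χ => map_add χ a b
  commutes' r := ContinuousMap.ext fun χ => χ.commutes r

theorem exists_forall_abs_character_le_of_adjoin_eq_top {s : Set A}
    (hs : Algebra.adjoin ℝ s = ⊤) {K : Set (A →ₐ[ℝ] ℝ)}
    (hbdd : ∀ g ∈ s, ∃ C, ∀ χ ∈ K, |χ g| ≤ C) (a : A) : ∃ C, ∀ χ ∈ K, |χ a| ≤ C := by
  have ha : a ∈ Algebra.adjoin ℝ s := hs ▸ Algebra.mem_top
  induction ha using Algebra.adjoin_induction with
  | mem g hg => exact hbdd g hg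
  | algebraMap r => exact ⟨|r|, fun χ _ => by rw [χ.commutes, Algebra.algebraMap_self_apply]⟩
  | add a b _ _ iha ihb =>
    obtain ⟨C, hC⟩ := iha
    obtain ⟨D, hD⟩ := ihb
    refine ⟨C + D, fun χ hχ => ?_⟩
    rw [map_add]
    exact (abs_add_le _ _).trans (add_le_add (hC χ hχ) (hD χ hχ))
  | mul a b _ _ iha ihb =>
    obtain ⟨C, hC⟩ := iha
    obtain ⟨D, hD⟩ := ihb
    refine ⟨C * D, fun χ hχ => ?_⟩
    rw [map_mul, abs_mul]
    exact mul_le_mul (hC χ hχ) (hD χ hχ) (abs_nonneg _) ((abs_nonneg _).trans (hC χ hχ))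

theorem isCompact_of_forall_abs_character_le {K : Set (A →ₐ[ℝ] ℝ)} (hK : IsClosed K)
    (hbdd : ∀ a, ∃ C, ∀ χ ∈ K, |χ a| ≤ C) : IsCompact K := by
  choose C hC using hbdd
  have hbox : IsCompact (Set.univ.pi fun a => Set.Icc (-C a) (C a)) :=
    isCompact_univ_pi fun _ => isCompact_Icc
  refine (isClosedEmbedding_character.isCompact_preimage hbox).of_isClosed_subset hK ?_
  exact fun χ hχ a _ => abs_le.1 (hC a χ hχ)

theorem exists_forall_isCompact_setOf_character_le (A : Type*) [CommRing A] [Algebra ℝ A]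
    [hA : Algebra.FiniteType ℝ A] :
    ∃ N : A, (∀ χ : A →ₐ[ℝ] ℝ, 0 ≤ χ N) ∧
      ∀ r, IsCompact {χ : A →ₐ[ℝ] ℝ | χ N ≤ r} := by
  obtain ⟨s, hs⟩ := hA.out
  have hN (χ : A →ₐ[ℝ] ℝ) : χ (∑ g ∈ s, g ^ 2) = ∑ g ∈ s, χ g ^ 2 := by
    simp only [map_sum, map_pow]
  refine ⟨∑ g ∈ s, g ^ 2, fun χ => ?_, fun r => ?_⟩
  · rw [hN]
    exact Finset.sum_nonneg fun g _ => sq_nonneg (χ g)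
  · refine isCompact_of_forall_abs_character_le
      (isClosed_le (continuous_character_apply _) continuous_const) fun a =>
      exists_forall_abs_character_le_of_adjoin_eq_top hs
        (fun g hg => ⟨√r, fun χ hχ => Real.abs_le_sqrt ?_⟩) a
    calc χ g ^ 2 ≤ ∑ g ∈ s, χ g ^ 2 :=
          Finset.single_le_sum (f := fun g => χ g ^ 2) (fun g _ => sq_nonneg (χ g)) hg
      _ = χ (∑ g ∈ s, g ^ 2) := (hN χ).symm
      _ ≤ r := hχ

instance [Algebra.FiniteType ℝ A] : LocallyCompactSpace (A →ₐ[ℝ] ℝ) := by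
  obtain ⟨N, -, hcompact⟩ := exists_forall_isCompact_setOf_character_le A
  have : WeaklyLocallyCompactSpace (A →ₐ[ℝ] ℝ) := ⟨fun χ => ⟨_, hcompact (χ N + 1),
    (continuous_character_apply N).continuousAt.eventually_le_const (lt_add_one (χ N))⟩⟩
  infer_instance

theorem isMomentFunctional_of_nonneg [Algebra.FiniteType ℝ A] {L : A →ₗ[ℝ] ℝ}
    (hL : ∀ p, (∀ χ : A →ₐ[ℝ] ℝ, 0 ≤ χ p) → 0 ≤ L p) : IsMomentFunctional L := by
  obtain ⟨N, hN, hcompact⟩ := exists_forall_isCompact_setOf_character_le A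
  exact exists_measure_forall_integrable_and_eq_integral (ev := evaluationHom A) hN hcompact hL

end CharacterSpace

section Fibres

theorem isMomentFunctional_of_surjective_quotient {A B : Type*} [CommRing A] [Algebra ℝ A]
    [CommRing B] [Algebra ℝ B] [Algebra.FiniteType ℝ A] [Algebra.FiniteType ℝ B]
    (hB : ∀ L : B →ₗ[ℝ] ℝ, (∀ b, 0 ≤ L (b ^ 2)) → IsMomentFunctional L) {I : Ideal A}
    {ρ : B →ₐ[ℝ] A ⧸ I} (hρ : Function.Surjective ρ) {E : A →ₗ[ℝ] ℝ}
    (hsq : ∀ a, 0 ≤ E (a ^ 2)) (hE : ∀ a ∈ I, E a = 0) : IsMomentFunctional E :=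
  isMomentFunctional_of_nonneg fun _ hp => nonneg_of_surjective_quotient hB hρ hsq hE hp

theorem mp_of_fibre_quotient_surjection_general {A ι : Type*} [CommRing A] [Algebra ℝ A]
    [Algebra.FiniteType ℝ A] {S : Set A} (hS : S.Finite) (h : ι → A)
    (hbdd : ∀ j, ∃ C : ℝ, ∀ χ ∈ KSet S, |χ (h j)| ≤ C)
    (hfibre : ∀ lam : ι → ℝ, (∃ χ ∈ KSet S, ∀ j, χ (h j) = lam j) →
      ∀ E : A →ₗ[ℝ] ℝ, (∀ a, IsInPreordering S a → 0 ≤ E a) →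
        (∀ a ∈ Ideal.span (Set.range fun j => h j - algebraMap ℝ A (lam j)), E a = 0) →
        IsMomentFunctional E)
    {L : A →ₗ[ℝ] ℝ} (hL : ∀ a, IsInPreordering S a → 0 ≤ L a) : IsMomentFunctional L := by
  refine isMomentFunctional_of_nonneg fun p hp =>
    nonneg_of_forall_isExtremal (fun E hE => ?_) hL
  choose lam hlam using fun j => hE.exists_map_mul_eq hS (hbdd j)
  have hvanish : ∀ a ∈ Ideal.span (Set.range fun j => h j - algebraMap ℝ A (lam j)), E a = 0 := by
    refine fun a => map_eq_zero_of_mem_span ?_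
    rintro _ ⟨j, rfl⟩ b
    rw [mul_sub, mul_comm b, mul_comm b, map_sub, hlam, ← Algebra.smul_def, map_smul,
      smul_eq_mul, sub_self]
  rcases eq_or_ne E 0 with rfl | hne
  · exact le_rfl
  obtain ⟨χ, hχS, hχ⟩ := exists_mem_KSet_forall_mem_eq_zero hS hE.nonneg hvanish hne
  refine (hfibre lam ⟨χ, hχS, fun j => ?_⟩ E hE.nonneg hvanish).nonneg hp
  have := hχ _ (Ideal.subset_span ⟨j, rfl⟩)
  rwa [map_sub, χ.commutes, sub_eq_zero] at this

end Fibres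

/-- **Corollary 2.6 of the fibre theorem.**  Let `A` be a finitely generated
commutative real unital algebra, `T` the preordering generated by `f₁, …, f_k`,
and `h₁, …, h_m ∈ A` bounded on `K(T)`.  If for every `λ ∈ h(K(T))` there are a
finitely generated real unital algebra `B_λ` in which squares have the moment
property and a surjective algebra homomorphism `B_λ → A/I_λ` onto the quotient
by the fibre ideal `I_λ`, then every `T`-positive linear functional on `A` is a
moment functional. -/
theorem mp_of_fibre_quotient_surjection
    {A : Type} [CommRing A] [Algebra ℝ A] (hfg : Algebra.FiniteType ℝ A)
    {k m : ℕ} (f : Fin k → A) (h : Fin m → A)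
    (hbd : ∃ C : ℝ, ∀ χ ∈ KSet (Set.range f), ∀ j : Fin m, |χ (h j)| ≤ C)
    (hfib : ∀ lam : Fin m → ℝ,
      (∃ χ ∈ KSet (Set.range f), ∀ j : Fin m, χ (h j) = lam j) →
      ∃ (B : MPAlgebra)
        (ρ : B.carrier →ₐ[ℝ]
          (A ⧸ Ideal.span (Set.range fun j : Fin m => h j - algebraMap ℝ A (lam j)))),
        Function.Surjective ρ) :
    ∀ L : A →ₗ[ℝ] ℝ, (∀ a : A, IsInPreordering (Set.range f) a → 0 ≤ L a) →
      IsMomentFunctional L := by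
  intro L hL
  refine mp_of_fibre_quotient_surjection_general (Set.finite_range f) h
    (fun j => hbd.imp fun C hC χ hχ => hC χ hχ j) (fun lam hlam E hE hvanish => ?_) hL
  obtain ⟨B, ρ, hρ⟩ := hfib lam hlam
  have := B.fg
  exact isMomentFunctional_of_surjective_quotient B.mp hρ (fun a => hE _ (.sq a)) hvanish
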